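/- arXiv:math/9512217 — 5 statements merged into one kernel-verified Lean document; each statement's English description precedes it below -/
import Mathlib

section
/- Let c ∈ ℚ and f_c(z) = z² + c. Then f_c has a rational point of exact period 2 if and only if c = −3/4 − σ² for some σ ∈ ℚ with σ ≠ 0. In that case the set of rational points of exact period 2 is exactly {−1/2 + σ, −1/2 − σ}, and these two points form a 2-cycle: f_c(−1/2 + σ) = −1/2 − σ and f_c(−1/2 − σ) = −1/2 + σ. -/
/-! The second iterate satisfies the factorization
`f_c(f_c(x)) - x = (x² - x + c)(x² + x + c + 1)`, whose first factor vanishes exactly at the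
fixed points. Hence the points of exact period 2 are the roots of `x² + x + c + 1` that are not
fixed. On such a root `f_c(x) = -1 - x`, so it is fixed only if `x = -1/2`. Completing the square
turns the quadratic into `c = -3/4 - (x + 1/2)²`, and `σ = x + 1/2` is the parameter; the other
root corresponds to `-σ`. -/

/-- The quadratic map `f_c(z) = z^2 + c`. -/
def fc (c : ℚ) : ℚ → ℚ := fun z => z ^ 2 + c

/-- `x` has exact period `m` under `f`: the `m`-th iterate returns to `x`,
and no earlier iterate (with `1 ≤ k < m`) does. -/
def ExactPeriod (f : ℚ → ℚ) (m : ℕ) (x : ℚ) : Prop :=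
  f^[m] x = x ∧ ∀ k : ℕ, 1 ≤ k → k < m → f^[k] x ≠ x

/-- `x` is periodic under `f` if it has some exact period `m ≥ 1`. -/
def IsPeriodicPoint (f : ℚ → ℚ) (x : ℚ) : Prop :=
  ∃ m : ℕ, 1 ≤ m ∧ ExactPeriod f m x

/-- `x` is preperiodic under `f` if some iterate of `x` is periodic. -/
def IsPreperiodicPoint (f : ℚ → ℚ) (x : ℚ) : Prop :=
  ∃ n : ℕ, IsPeriodicPoint f (f^[n] x)

/-- `x` has type `m_n` for `f`: `f^[n] x` has exact period `m`, and `n` is the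
least nonnegative integer `k` such that `f^[k] x` is periodic. -/
def HasType (f : ℚ → ℚ) (m n : ℕ) (x : ℚ) : Prop :=
  ExactPeriod f m (f^[n] x) ∧ ∀ k : ℕ, k < n → ¬ IsPeriodicPoint f (f^[k] x)

/-- The dynatomic description of points of exact period 2, with the square completed. -/
lemma exactPeriod_two_iff (c x : ℚ) :
    ExactPeriod (fc c) 2 x ↔ x + 1/2 ≠ 0 ∧ c = -3/4 - (x + 1/2)^2 := by
  constructor
  · rintro ⟨h2, h1⟩
    have h1' : x ^ 2 + c ≠ x := h1 1 le_rfl one_lt_two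
    have h2' : (x ^ 2 + c) ^ 2 + c = x := h2
    have hmul : (x ^ 2 + c - x) * (x ^ 2 + x + c + 1) = 0 := by linear_combination h2'
    have hq := (mul_eq_zero.mp hmul).resolve_left (sub_ne_zero.mpr h1')
    exact ⟨fun h => h1' (by linear_combination hq - 2 * h), by linear_combination hq⟩
  · rintro ⟨hx, hc⟩
    refine ⟨?_, fun k hk hk2 => ?_⟩
    · change (x ^ 2 + c) ^ 2 + c = x
      subst hc
      ring
    · obtain rfl : k = 1 := by omega
      change x ^ 2 + c ≠ x
      exact fun h => hx (by linear_combination (hc - h) / 2)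

/-- `f_c` has a rational point of exact period 2 iff `c = -3/4 - σ²` for some
nonzero `σ ∈ ℚ`; in that case the set of rational points of exact period 2 is exactly
`{-1/2 + σ, -1/2 - σ}` and these form a 2-cycle. -/
theorem stmt_1 (c : ℚ) :
    ((∃ x : ℚ, ExactPeriod (fc c) 2 x) ↔ ∃ σ : ℚ, σ ≠ 0 ∧ c = -3/4 - σ^2) ∧
    (∀ σ : ℚ, σ ≠ 0 → c = -3/4 - σ^2 →
      {x : ℚ | ExactPeriod (fc c) 2 x} = {-1/2 + σ, -1/2 - σ} ∧
      fc c (-1/2 + σ) = -1/2 - σ ∧ fc c (-1/2 - σ) = -1/2 + σ) := by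
  constructor
  · simp only [exactPeriod_two_iff]
    constructor
    · rintro ⟨x, hx⟩
      exact ⟨x + 1/2, hx⟩
    · rintro ⟨σ, hσ⟩
      exact ⟨σ - 1/2, by simpa using hσ⟩
  · intro σ hσ hc
    refine ⟨?_, by simp only [fc, hc]; ring, by simp only [fc, hc]; ring⟩
    ext x
    simp only [Set.mem_ofPred_eq, Set.mem_insert_iff, Set.mem_singleton_iff, exactPeriod_two_iff]
    constructor
    · rintro ⟨-, hx⟩
      have hsq : (x + 1/2) ^ 2 = σ ^ 2 := by linear_combination hx - hc
      rcases sq_eq_sq_iff_eq_or_eq_neg.mp hsq with h | h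
      · left; linear_combination h
      · right; linear_combination h
    · rintro (rfl | rfl)
      · exact ⟨fun h => hσ (by linear_combination h), by linear_combination hc⟩
      · exact ⟨fun h => hσ (by linear_combination -h), by linear_combination hc⟩
end

section
/- Let c ∈ ℚ and f_c(z) = z² + c. Then f_c has a rational point of exact period 3 if and only if c = −(τ⁶ + 2τ⁵ + 4τ⁴ + 8τ³ + 9τ² + 4τ + 1)/(4τ²(τ+1)²) for some τ ∈ ℚ with τ ≠ 0 and τ ≠ −1. In that case the set of rational points of exact period 3 is exactly the three-element set {x₁, x₂, x₃}, where x₁ = (τ³ + 2τ² + τ + 1)/(2τ(τ+1)), x₂ = (τ³ − τ − 1)/(2τ(τ+1)), x₃ = −(τ³ + 2τ² + 3τ + 1)/(2τ(τ+1)), and f_c permutes x₁, x₂, x₃ cyclically (each is mapped by f_c to another of the three, and they form a single 3-cycle). -/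
/-! ### Squares, fourth powers and coprimality -/

/-- If coprime positive integers multiply to a prime power times a fourth power, then one of them
is a fourth power and the other is the prime power times a fourth power. -/
theorem split_fourth {c : ℕ} (hc : IsPrimePow c) {g h y : ℤ} (hg : 0 < g) (hh : 0 < h)
    (hcop : IsCoprime g h) (hy : g * h = c * y ^ 4) :
    ∃ e f : ℤ, IsCoprime e f ∧ y = e * f ∧
      ((g = c * e ^ 4 ∧ h = f ^ 4) ∨ (g = f ^ 4 ∧ h = c * e ^ 4)) := by
  have aux : ∀ g h : ℕ, Nat.Coprime g h → c ∣ g → g * h = c * y.natAbs ^ 4 →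
      ∃ e f : ℤ, IsCoprime e f ∧ y = e * f ∧ (g : ℤ) = c * e ^ 4 ∧ (h : ℤ) = f ^ 4 := by
    rintro g h hgh ⟨a, rfl⟩ h1
    have hc0 : 0 < c := hc.pos
    have h2 : a * h = y.natAbs ^ 4 := by
      rw [mul_assoc] at h1
      exact Nat.eq_of_mul_eq_mul_left hc0 h1
    have hah : Nat.Coprime a h := Nat.Coprime.coprime_mul_left hgh
    obtain ⟨e, he⟩ := exists_eq_pow_of_mul_eq_pow (Nat.isUnit_iff.2 hah) h2
    obtain ⟨f, hf⟩ := exists_eq_pow_of_mul_eq_pow (Nat.isUnit_iff.2 hah.symm) ((mul_comm _ _).trans h2)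
    have hef : y.natAbs = e * f := by
      have : y.natAbs ^ 4 = (e * f) ^ 4 := by rw [← h2, he, hf]; ring
      exact Nat.pow_left_injective (n := 4) (by norm_num) this
    have hc2 : IsCoprime (e : ℤ) (f : ℤ) := by
      rw [Nat.isCoprime_iff_coprime]
      rw [he, hf] at hah
      exact (Nat.coprime_pow_left_iff (by norm_num) _ _).1
        ((Nat.coprime_pow_right_iff (by norm_num) _ _).1 hah)
    rcases Int.natAbs_eq y with h3 | h3
    · exact ⟨e, f, hc2, by rw [h3, hef]; push_cast; ring, by rw [he]; push_cast; ring,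
        by rw [hf]; push_cast; ring⟩
    · exact ⟨-e, f, hc2.neg_left, by rw [h3, hef]; push_cast; ring, by rw [he]; push_cast; ring,
        by rw [hf]; push_cast; ring⟩
  lift g to ℕ using hg.le
  lift h to ℕ using hh.le
  have h1 : g * h = c * y.natAbs ^ 4 := by
    have : ((g * h : ℕ) : ℤ) = ((c * y.natAbs ^ 4 : ℕ) : ℤ) := by
      push_cast
      rw [hy, Even.pow_abs (by decide)]
    exact_mod_cast this
  have hco := Nat.isCoprime_iff_coprime.1 hcop
  rcases (hco.isPrimePow_dvd_mul hc).1 ⟨_, h1⟩ with hd | hd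
  · obtain ⟨e, f, a, b, d, k⟩ := aux g h hco hd h1
    exact ⟨e, f, a, b, Or.inl ⟨d, k⟩⟩
  · obtain ⟨e, f, a, b, d, k⟩ := aux h g hco.symm hd ((mul_comm _ _).trans h1)
    exact ⟨e, f, a, b, Or.inr ⟨k, d⟩⟩

/-- If `a * b` is a square and `2` is the only possible common prime factor of `a` and `b`, then
`a` is a square or twice a square: the squarefree part of `a` divides `b`. -/
theorem square_class {a b w : ℕ} (ha : 0 < a)
    (h : a * b = w ^ 2) (h2 : ∀ p : ℕ, p.Prime → p ∣ a → p ∣ b → p = 2) :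
    ∃ t, a = t ^ 2 ∨ a = 2 * t ^ 2 := by
  obtain ⟨s, t, hst, hs⟩ := Nat.sq_mul_squarefree a
  have ht : t ≠ 0 := by rintro rfl; simp at hst; omega
  have htw : t ∣ w := by
    rw [← Nat.pow_dvd_pow_iff (n := 2) (by norm_num), ← h, ← hst, mul_assoc]
    exact dvd_mul_right _ _
  obtain ⟨k, rfl⟩ := htw
  have hk : s * b = k ^ 2 := by
    have : t ^ 2 * (s * b) = t ^ 2 * k ^ 2 := by rw [← mul_assoc, hst, h]; ring
    exact Nat.eq_of_mul_eq_mul_left (by positivity) this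
  have hsk : s ∣ k := (hs.dvd_pow_iff_dvd (by norm_num)).1 ⟨b, hk.symm⟩
  have hs0 : 0 < s := Nat.pos_of_ne_zero hs.ne_zero
  have hsb : s ∣ b := by
    obtain ⟨l, rfl⟩ := hsk
    refine ⟨l ^ 2, Nat.eq_of_mul_eq_mul_left hs0 ?_⟩
    rw [hk]; ring
  have hsa : s ∣ a := ⟨t ^ 2, by rw [← hst]; ring⟩
  have hpow : s = 2 ^ s.primeFactorsList.length :=
    Nat.eq_prime_pow_of_unique_prime_dvd hs.ne_zero
      fun hp hps => h2 _ hp (hps.trans hsa) (hps.trans hsb)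
  rcases Nat.lt_or_ge s.primeFactorsList.length 2 with hl | hl
  · refine ⟨t, ?_⟩
    interval_cases s.primeFactorsList.length
    · left; rw [← hst, hpow]; ring
    · right; rw [← hst, hpow]; ring
  · have h4 : 2 * 2 ∣ s := by
      rw [hpow]
      exact pow_dvd_pow 2 hl
    exact absurd (Nat.isUnit_iff.1 (hs 2 h4)) (by norm_num)

theorem coprime_of_no_prime {a b : ℤ} (h : ∀ p : ℤ, Prime p → p ∣ a → p ∣ b → False) :
    IsCoprime a b :=
  isCoprime_of_prime_dvd
    (by rintro ⟨rfl, rfl⟩; exact h 2 Int.prime_two (dvd_zero _) (dvd_zero _))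
    (fun p hp ha hb => h p hp ha hb)

/-- Here `p` may be an associate of `7`: then `49` divides `7 * y ^ 4`, so `7` still divides `y`. -/
theorem dvd_of_seven {p g h y : ℤ} (hp : Prime p) (hg : p ∣ g) (hh : p ∣ h)
    (e : g * h = 7 * y ^ 4) : p ∣ y := by
  have h1 : p ∣ 7 * y ^ 4 := e ▸ hg.mul_right h
  rcases hp.dvd_or_dvd h1 with h7 | h7
  · have p7 : Prime (7 : ℤ) := by norm_num
    have h7p : (7 : ℤ) ∣ p := ((hp.dvd_prime_iff_associated p7).1 h7).symm.dvd
    obtain ⟨a, rfl⟩ := h7p.trans hg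
    obtain ⟨b, rfl⟩ := h7p.trans hh
    have : (7 : ℤ) ∣ y ^ 4 := ⟨a * b, by linarith⟩
    exact h7.trans (p7.dvd_of_dvd_pow this)
  · exact hp.dvd_of_dvd_pow h7

theorem pos_of_mul_add {g h : ℤ} (h1 : 0 < g * h) (h2 : 0 < g + h) : 0 < g ∧ 0 < h := by
  rcases pos_and_pos_or_neg_and_neg_of_mul_pos h1 with h | h
  · exact h
  · omega

theorem sq_eq_one_of_coprime {m n : ℤ} (h : IsCoprime n m) (e : m ^ 2 = n ^ 2) : n ^ 2 = 1 := by
  have h1 : IsCoprime (n ^ 2) (n ^ 2) := by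
    have := h.pow (m := 2) (n := 2)
    rwa [e] at this
  rcases Int.isUnit_iff.1 (isCoprime_self.1 h1) with h2 | h2
  · exact h2
  · nlinarith [sq_nonneg n]

/-! ### Descent on the quartic -/

/-- Descent step for odd `y`. From `16β² = (8x² - 11y²)² + 7y⁴` one gets `y = ef` and
`16x² = (f² + 11e²)² - 128e⁴`; with `f² + 11e² = 4F` this becomes `F² = x² + 8e⁴`, which factors again
and yields a solution `(m, n, f)` of the same quartic with `n ∣ y`. -/
theorem quartic_step_odd {x y β : ℤ} (hxy : IsCoprime x y) (hy : Odd y)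
    (h : β ^ 2 = 4 * x ^ 4 - 11 * x ^ 2 * y ^ 2 + 8 * y ^ 4) :
    ∃ m n f e F : ℤ, IsCoprime n m ∧ y = n * m * f ∧ e = n * m ∧
      f ^ 2 = 4 * m ^ 4 - 11 * m ^ 2 * n ^ 2 + 8 * n ^ 4 ∧
      F = 2 * n ^ 4 + m ^ 4 ∧ F ^ 2 = x ^ 2 + 8 * e ^ 4 := by
  have hx : Odd x := by
    by_contra hx
    obtain ⟨a, rfl⟩ := even_iff_two_dvd.1 (Int.not_odd_iff_even.1 hx)
    obtain ⟨b, rfl⟩ := hy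
    have hβ : 2 ∣ β := by
      refine Int.prime_two.dvd_of_dvd_pow (n := 2) ⟨32 * a ^ 4 - 22 * a ^ 2 * (2 * b + 1) ^ 2
        + 4 * (2 * b + 1) ^ 4, by rw [h]; ring⟩
    obtain ⟨c, rfl⟩ := hβ
    -- For even `x` and odd `y` the quartic is four times a non-square modulo 8.
    have h1 : c ^ 2 = 16 * a ^ 4 - 11 * a ^ 2 * (2 * b + 1) ^ 2 + 2 * (2 * b + 1) ^ 4 := by
      linarith
    have h2 := congrArg (Int.cast : ℤ → ZMod 8) h1
    push_cast at h2
    revert h2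
    generalize (a : ZMod 8) = a
    generalize (b : ZMod 8) = b
    generalize (c : ZMod 8) = c
    revert a b c
    decide
  have hyp : 0 < y ^ 4 := by
    have : y ≠ 0 := by rintro rfl; simp at hy
    positivity
  obtain ⟨B, hB, hB2⟩ : ∃ B : ℤ, 0 < B ∧ B ^ 2 = β ^ 2 := by
    refine ⟨|β|, abs_pos.2 ?_, sq_abs β⟩
    rintro rfl
    nlinarith [sq_nonneg (8 * x ^ 2 - 11 * y ^ 2)]
  rw [← hB2] at h
  have hprod : (4 * B - (8 * x ^ 2 - 11 * y ^ 2)) * (4 * B + (8 * x ^ 2 - 11 * y ^ 2))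
      = 7 * y ^ 4 := by linear_combination 16 * h
  obtain ⟨hg, hh⟩ := pos_of_mul_add (by rw [hprod]; positivity) (by linarith)
  have hcop : IsCoprime (4 * B - (8 * x ^ 2 - 11 * y ^ 2)) (4 * B + (8 * x ^ 2 - 11 * y ^ 2)) := by
    refine coprime_of_no_prime fun p hp h1 h2 => ?_
    have hpy := dvd_of_seven hp h1 h2 hprod
    have h3 : p ∣ 2 ^ 4 * x ^ 2 := by
      have := dvd_add (dvd_sub h2 h1) ((hpy.pow two_ne_zero).mul_left 22)
      ring_nf at this ⊢
      exact this
    rcases hp.dvd_or_dvd h3 with h4 | h4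
    · have h5 := hp.dvd_of_dvd_pow h4
      obtain ⟨i, rfl⟩ := hy
      exact hp.not_isUnit (isUnit_of_dvd_one ((dvd_add_right (h5.mul_right i)).1 hpy))
    · exact hp.not_isUnit (hxy.isUnit_of_dvd' (hp.dvd_of_dvd_pow h4) hpy)
  obtain ⟨e, f, hef, rfl, hs⟩ := split_fourth (c := 7)
    (Nat.Prime.isPrimePow (by norm_num)) hg hh hcop (by exact_mod_cast hprod)
  obtain ⟨he, hf⟩ := Int.odd_mul.1 hy
  push_cast at hs
  have hx16 : 16 * x ^ 2 = 22 * e ^ 2 * f ^ 2 + f ^ 4 - 7 * e ^ 4 := by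
    rcases hs with ⟨h1, h2⟩ | ⟨h1, h2⟩
    · linarith
    · exfalso
      -- The other sign fails modulo 16, as `e` and `f` are odd.
      have h3 : 16 * x ^ 2 = 22 * e ^ 2 * f ^ 2 + 7 * e ^ 4 - f ^ 4 := by linarith
      obtain ⟨i, rfl⟩ := he
      obtain ⟨j, rfl⟩ := hf
      have h2 := congrArg (Int.cast : ℤ → ZMod 16) h3
      push_cast at h2
      revert h2
      rw [show (16 : ZMod 16) = 0 from rfl, zero_mul]
      generalize (i : ZMod 16) = a
      generalize (j : ZMod 16) = b
      revert a b
      decide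
  obtain ⟨F, hF⟩ : ∃ F, f ^ 2 + 11 * e ^ 2 = 4 * F := by
    obtain ⟨i, rfl⟩ := he
    obtain ⟨j, rfl⟩ := hf
    exact ⟨j ^ 2 + j + 11 * i ^ 2 + 11 * i + 3, by ring⟩
  have hF2 : F ^ 2 = x ^ 2 + 8 * e ^ 4 := by
    have : 16 * F ^ 2 = 16 * (x ^ 2 + 8 * e ^ 4) := by
      linear_combination (-4 * F - (f ^ 2 + 11 * e ^ 2)) * hF - hx16
    linarith
  have hFpos : 0 < F := by
    have : e ≠ 0 := by rintro rfl; simp at he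
    have : 0 < e ^ 2 := by positivity
    nlinarith [sq_nonneg f]
  obtain ⟨g, hg'⟩ : ∃ g, F = x + 2 * g := by
    have hFo : Odd (F ^ 2) := by
      rw [hF2]
      exact (hx.pow).add_even ⟨4 * e ^ 4, by ring⟩
    have hFo' : Odd F := (Int.odd_pow' two_ne_zero).1 hFo
    obtain ⟨i, rfl⟩ := hFo'
    obtain ⟨j, rfl⟩ := hx
    exact ⟨i - j, by ring⟩
  have hp2 : g * (g + x) = 2 * e ^ 4 := by
    rw [hg'] at hF2; linarith
  have he4 : 0 < e ^ 4 := by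
    have : e ≠ 0 := by rintro rfl; simp at he
    positivity
  obtain ⟨hg1, hh1⟩ := pos_of_mul_add (by rw [hp2]; positivity) (by linarith : 0 < g + (g + x))
  have hcop2 : IsCoprime g (g + x) := by
    refine coprime_of_no_prime fun p hp h1 h2 => ?_
    have hpx : p ∣ x := (dvd_add_right h1).1 h2
    have hpF : p ∣ F := by rw [hg']; exact dvd_add hpx (h1.mul_left 2)
    have h3 : p ∣ 2 * e ^ 4 := hp2 ▸ h1.mul_right _
    rcases hp.dvd_or_dvd h3 with h4 | h4
    · obtain ⟨i, rfl⟩ := hx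
      exact hp.not_isUnit (isUnit_of_dvd_one ((dvd_add_right (h4.mul_right i)).1 hpx))
    · have hpe := hp.dvd_of_dvd_pow h4
      have hpf : p ∣ f ^ 2 := by
        have : f ^ 2 = 4 * F - 11 * e ^ 2 := by linarith
        rw [this]
        exact dvd_sub (hpF.mul_left 4) ((hpe.pow two_ne_zero).mul_left 11)
      exact hp.not_isUnit (hef.isUnit_of_dvd' hpe (hp.dvd_of_dvd_pow hpf))
  obtain ⟨n, m, hnm, rfl, hs2⟩ := split_fourth (c := 2)
    (Nat.Prime.isPrimePow (by norm_num)) hg1 hh1 hcop2 (by exact_mod_cast hp2)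
  push_cast at hs2
  have hFm : F = 2 * n ^ 4 + m ^ 4 := by
    rcases hs2 with ⟨h1, h2⟩ | ⟨h1, h2⟩ <;> linarith
  exact ⟨m, n, f, n * m, F, hnm, rfl, rfl, by linear_combination hF + 4 * hFm, hFm, hF2⟩

/-- Descent step for even `y`. Here `4 ∣ y`, and the two factorizations lead to
`f² = m⁴ - 11m²n² + 32n⁴`, which says that `(m, 2n, 2f)` solves the original quartic. -/
theorem quartic_step_even {x y β : ℤ} (hxy : IsCoprime x y) (hy : Even y) (hy0 : y ≠ 0)
    (h : β ^ 2 = 4 * x ^ 4 - 11 * x ^ 2 * y ^ 2 + 8 * y ^ 4) :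
    ∃ m n f : ℤ, IsCoprime (2 * n) m ∧ y = 4 * n * m * f ∧
      f ^ 2 = m ^ 4 - 11 * m ^ 2 * n ^ 2 + 32 * n ^ 4 := by
  obtain ⟨y₁, rfl⟩ := even_iff_two_dvd.1 hy
  have hx : Odd x := by
    by_contra hx
    have h2 := even_iff_two_dvd.1 (Int.not_odd_iff_even.1 hx)
    exact Int.prime_two.not_isUnit (hxy.isUnit_of_dvd' h2 (dvd_mul_right _ _))
  have hβ : 2 ∣ β := by
    refine Int.prime_two.dvd_of_dvd_pow (n := 2) ⟨2 * x ^ 4 - 22 * x ^ 2 * y₁ ^ 2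
      + 64 * y₁ ^ 4, by rw [h]; ring⟩
  obtain ⟨b, rfl⟩ := hβ
  have h1 : b ^ 2 = x ^ 4 - 11 * x ^ 2 * y₁ ^ 2 + 32 * y₁ ^ 4 := by linarith
  have hy1 : Even y₁ := by
    by_contra hy1
    obtain ⟨j, rfl⟩ := Int.not_even_iff_odd.1 hy1
    obtain ⟨i, rfl⟩ := hx
    have h2 := congrArg (Int.cast : ℤ → ZMod 8) h1
    push_cast at h2
    revert h2
    generalize (i : ZMod 8) = i
    generalize (j : ZMod 8) = j
    generalize (b : ZMod 8) = b
    revert i j b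
    decide
  obtain ⟨y, rfl⟩ := even_iff_two_dvd.1 hy1
  have hy0' : y ≠ 0 := by rintro rfl; simp at hy0
  have hyp : 0 < y ^ 4 := by positivity
  have hxy' : IsCoprime x y := hxy.of_mul_right_right.of_mul_right_right
  obtain ⟨B, hB, hB2⟩ : ∃ B : ℤ, 0 < B ∧ B ^ 2 = b ^ 2 := by
    refine ⟨|b|, abs_pos.2 ?_, sq_abs b⟩
    rintro rfl
    nlinarith [sq_nonneg (x ^ 2 - 22 * y ^ 2)]
  rw [← hB2] at h1
  obtain ⟨g, hg'⟩ : ∃ g, B = (x ^ 2 - 22 * y ^ 2) + 2 * g := by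
    have hBo : Odd (B ^ 2) := by
      rw [h1]
      have : Odd (x ^ 4) := hx.pow
      obtain ⟨k, hk⟩ := this
      exact ⟨k - 22 * x ^ 2 * y ^ 2 + 256 * y ^ 4, by rw [hk]; ring⟩
    obtain ⟨i, rfl⟩ := (Int.odd_pow' two_ne_zero).1 hBo
    obtain ⟨j, hj⟩ : Odd (x ^ 2) := hx.pow
    exact ⟨i - j + 11 * y ^ 2, by rw [hj]; ring⟩
  have hprod : g * (g + (x ^ 2 - 22 * y ^ 2)) = 7 * y ^ 4 := by
    rw [hg'] at h1; linarith
  obtain ⟨hg, hh⟩ := pos_of_mul_add (by rw [hprod]; positivity)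
    (by linarith : 0 < g + (g + (x ^ 2 - 22 * y ^ 2)))
  have hcop : IsCoprime g (g + (x ^ 2 - 22 * y ^ 2)) := by
    refine coprime_of_no_prime fun p hp h1 h2 => ?_
    have hpy := dvd_of_seven hp h1 h2 hprod
    have h3 : p ∣ x ^ 2 := by
      have := dvd_add ((dvd_add_right h1).1 h2) ((hpy.pow two_ne_zero).mul_left 22)
      rwa [sub_add_cancel] at this
    exact hp.not_isUnit (hxy'.isUnit_of_dvd' (hp.dvd_of_dvd_pow h3) hpy)
  obtain ⟨e, f, hef, rfl, hs⟩ := split_fourth (c := 7)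
    (Nat.Prime.isPrimePow (by norm_num)) hg hh hcop (by exact_mod_cast hprod)
  push_cast at hs
  have hx2 : x ^ 2 = 22 * e ^ 2 * f ^ 2 + f ^ 4 - 7 * e ^ 4 := by
    rcases hs with ⟨h1, h2⟩ | ⟨h1, h2⟩
    · linarith
    · exfalso
      -- The other sign fails modulo 8, as `x` is odd.
      have h3 : x ^ 2 = 22 * e ^ 2 * f ^ 2 + 7 * e ^ 4 - f ^ 4 := by linarith
      obtain ⟨i, rfl⟩ := hx
      have h2 := congrArg (Int.cast : ℤ → ZMod 8) h3
      push_cast at h2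
      revert h2
      generalize (i : ZMod 8) = i
      generalize (e : ZMod 8) = e
      generalize (f : ZMod 8) = f
      revert i e f
      decide
  have he0 : e ≠ 0 := by rintro rfl; simp at hy0'
  obtain ⟨F, hF⟩ : ∃ F, F = f ^ 2 + 11 * e ^ 2 := ⟨_, rfl⟩
  have hF2 : F ^ 2 = x ^ 2 + 128 * e ^ 4 := by rw [hF, hx2]; ring
  have hFpos : 0 < F := by rw [hF]; positivity
  obtain ⟨g, hg'⟩ : ∃ g, F = x + 2 * g := by
    have hFo : Odd (F ^ 2) := by
      rw [hF2]
      exact (hx.pow).add_even ⟨64 * e ^ 4, by ring⟩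
    obtain ⟨i, hi⟩ := (Int.odd_pow' two_ne_zero).1 hFo
    obtain ⟨j, rfl⟩ := hx
    exact ⟨i - j, by rw [hi]; ring⟩
  have hp2 : g * (g + x) = 32 * e ^ 4 := by
    rw [hg'] at hF2; linarith
  obtain ⟨hg1, hh1⟩ := pos_of_mul_add (by rw [hp2]; positivity) (by linarith : 0 < g + (g + x))
  have hcop2 : IsCoprime g (g + x) := by
    refine coprime_of_no_prime fun p hp h1 h2 => ?_
    have hpx : p ∣ x := (dvd_add_right h1).1 h2
    have hpF : p ∣ F := by rw [hg']; exact dvd_add hpx (h1.mul_left 2)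
    have h3 : p ∣ 2 ^ 5 * e ^ 4 := by
      have := h1.mul_right (g + x)
      rw [hp2] at this
      exact this
    rcases hp.dvd_or_dvd h3 with h4 | h4
    · have h4 := hp.dvd_of_dvd_pow h4
      obtain ⟨i, rfl⟩ := hx
      exact hp.not_isUnit (isUnit_of_dvd_one ((dvd_add_right (h4.mul_right i)).1 hpx))
    · have hpe := hp.dvd_of_dvd_pow h4
      have hpf : p ∣ f ^ 2 := by
        have : f ^ 2 = F - 11 * e ^ 2 := by linarith
        rw [this]
        exact dvd_sub hpF ((hpe.pow two_ne_zero).mul_left 11)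
      exact hp.not_isUnit (hef.isUnit_of_dvd' hpe (hp.dvd_of_dvd_pow hpf))
  obtain ⟨n, m, hnm, rfl, hs2⟩ := split_fourth (c := 2 ^ 5) (y := e)
    (Nat.prime_two.isPrimePow.pow (by norm_num)) hg1 hh1 hcop2
    (by rw [hp2]; norm_num)
  norm_num at hs2
  have hFm : F = 32 * n ^ 4 + m ^ 4 := by
    rcases hs2 with ⟨h1, h2⟩ | ⟨h1, h2⟩ <;> linarith
  have hc3 : IsCoprime (32 * n ^ 4) (m ^ 4) := by
    rcases hs2 with ⟨h1, h2⟩ | ⟨h1, h2⟩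
    · rwa [h2, h1] at hcop2
    · rw [h2, h1] at hcop2
      exact hcop2.symm
  have hc4 : IsCoprime (2 * n) m := by
    rw [show 32 * n ^ 4 = (2 * n) * (16 * n ^ 3) by ring] at hc3
    exact (IsCoprime.pow_right_iff (m := 4) (by norm_num)).1 hc3.of_mul_left_left
  exact ⟨m, n, f, hc4, by ring, by linear_combination hFm - hF⟩

/-- The only coprime solutions of the quartic with `y ≠ 0` have `x² = y²`, by strong induction on
`|y|`. -/
theorem quartic_int (N : ℕ) : ∀ x y β : ℤ, y.natAbs = N → IsCoprime x y → y ≠ 0 →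
    β ^ 2 = 4 * x ^ 4 - 11 * x ^ 2 * y ^ 2 + 8 * y ^ 4 → x ^ 2 = y ^ 2 := by
  induction N using Nat.strong_induction_on with
  | _ N ih =>
  intro x y β hN hxy hy0 h
  have lt_of : ∀ a k : ℤ, y = a * k → 2 ≤ k.natAbs → a.natAbs < N := by
    rintro a k rfl hk
    have ha : 0 < a.natAbs := Int.natAbs_pos.2 (left_ne_zero_of_mul hy0)
    rw [← hN, Int.natAbs_mul]
    nlinarith
  rcases Int.even_or_odd y with hy | hy
  · exfalso
    obtain ⟨m, n, f, hc, hyn, hf⟩ := quartic_step_even hxy hy hy0 h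
    have hmf : m * f ≠ 0 := by
      intro h0
      exact hy0 (by rw [hyn, mul_assoc, h0, mul_zero])
    have h2n : 2 * n ≠ 0 := by
      intro h0
      exact hy0 (by rw [hyn, show 4 * n * m * f = 2 * n * (2 * m * f) by ring, h0, zero_mul])
    have hlt : (2 * n).natAbs < N := by
      refine lt_of (2 * n) (2 * (m * f)) (by rw [hyn]; ring) ?_
      have := Int.natAbs_pos.2 hmf
      rw [Int.natAbs_mul]
      simp only [Int.reduceAbs]
      omega
    have h1 := ih _ hlt m (2 * n) (2 * f) rfl hc.symm h2n (by linear_combination 4 * hf)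
    have h2 := sq_eq_one_of_coprime hc h1
    rw [mul_pow] at h2
    omega
  · obtain ⟨m, n, f, e, F, hc, hyn, he, hf, hF, hF2⟩ := quartic_step_odd hxy hy h
    have hn0 : n ≠ 0 := by rintro rfl; simp at hyn; exact hy0 hyn
    have hmf : m * f ≠ 0 := by
      intro h0
      exact hy0 (by rw [hyn, mul_assoc, h0, mul_zero])
    -- If `|mf| = 1` the quartic factors in `n²`; otherwise `|n| < |y|` and induction applies.
    have key : n ^ 2 = 1 ∧ m ^ 2 = 1 ∧ f ^ 2 = 1 := by
      rcases Nat.lt_or_ge (m * f).natAbs 2 with hlt | hge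
      · have h1 : (m * f).natAbs = 1 := by
          have := Int.natAbs_pos.2 hmf
          omega
        rw [Int.natAbs_mul] at h1
        obtain ⟨h2, h3⟩ := mul_eq_one.1 h1
        have hm2 : m ^ 2 = 1 := by rw [← Int.natAbs_sq, h2]; rfl
        have hf2 : f ^ 2 = 1 := by rw [← Int.natAbs_sq, h3]; rfl
        refine ⟨?_, hm2, hf2⟩
        have h4 : (n ^ 2 - 1) * (8 * n ^ 2 - 3) = 0 := by
          linear_combination hf2 - hf + (-4 * m ^ 2 - 4 + 11 * n ^ 2) * hm2
        rcases mul_eq_zero.1 h4 with h5 | h5 <;> omega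
      · have h1 := ih _ (lt_of n (m * f) (by rw [hyn]; ring) hge) m n f rfl hc.symm hn0 hf
        have hn2 := sq_eq_one_of_coprime hc h1
        have hm2 := h1.trans hn2
        refine ⟨hn2, hm2, ?_⟩
        rw [hf, show m ^ 4 = (m ^ 2) ^ 2 by ring, show n ^ 4 = (n ^ 2) ^ 2 by ring, hm2, hn2]
        norm_num
    obtain ⟨hn2, hm2, hf2⟩ := key
    have hy2 : y ^ 2 = 1 := by rw [hyn, mul_pow, mul_pow, hn2, hm2, hf2]; norm_num
    have he2 : e ^ 2 = 1 := by rw [he, mul_pow, hn2, hm2]; norm_num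
    have hF3 : F = 3 := by
      rw [hF, show m ^ 4 = (m ^ 2) ^ 2 by ring, show n ^ 4 = (n ^ 2) ^ 2 by ring, hm2, hn2]
      norm_num
    rw [hF3, show e ^ 4 = (e ^ 2) ^ 2 by ring, he2] at hF2
    rw [hy2]; linarith

theorem quartic_rat {t z : ℚ} (h : z ^ 2 = 4 * t ^ 4 - 11 * t ^ 2 + 8) : t ^ 2 = 1 := by
  have hd : (t.den : ℚ) ≠ 0 := by exact_mod_cast t.den_ne_zero
  have ht : t * t.den = t.num := Rat.mul_den_eq_num t
  have h1 : IsSquare ((4 * t.num ^ 4 - 11 * t.num ^ 2 * t.den ^ 2 + 8 * t.den ^ 4 : ℤ) : ℚ) := by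
    refine ⟨z * t.den ^ 2, ?_⟩
    push_cast
    rw [← ht]
    linear_combination (-(t.den : ℚ) ^ 4) * h
  obtain ⟨β, hβ⟩ := Rat.isSquare_intCast_iff.1 h1
  have hc : IsCoprime t.num (t.den : ℤ) := by
    rw [Int.isCoprime_iff_nat_coprime]
    exact t.reduced
  have h2 := quartic_int _ t.num t.den β rfl hc (by exact_mod_cast t.den_ne_zero)
    (by rw [hβ]; ring)
  have h3 : (t.num : ℚ) ^ 2 = (t.den : ℚ) ^ 2 := by exact_mod_cast h2
  rw [← ht, mul_pow] at h3
  exact mul_right_cancel₀ (pow_ne_zero 2 hd) (h3.trans (one_mul _).symm)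

/-! ### Rational points on the genus 1 curve -/

/-- The affine rational points of `W² = (2 - P)(2 - 5P + 4P²)` have `P ∈ {0, 1, 2}`. With
`r = 2 - P` the equation is `W² = r(4r² - 11r + 8)`; in lowest terms only the
prime `2` can divide both factors, so a nonzero `r` is a square or twice a square, and either case reduces to `quartic_rat`. -/
theorem curve_rat {P W : ℚ} (h : W ^ 2 = (2 - P) * (2 - 5 * P + 4 * P ^ 2)) :
    P = 0 ∨ P = 1 ∨ P = 2 := by
  obtain ⟨r, hr⟩ : ∃ r, r = 2 - P := ⟨_, rfl⟩
  obtain rfl : P = 2 - r := by rw [hr]; ring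
  have h1 : W ^ 2 = r * (4 * r ^ 2 - 11 * r + 8) := by rw [h]; ring
  clear h hr
  rcases eq_or_ne r 0 with rfl | hr0
  · right; right; norm_num
  have hq : 0 < 4 * r ^ 2 - 11 * r + 8 := by nlinarith [sq_nonneg (8 * r - 11)]
  have hrpos : 0 < r := by
    rcases lt_or_gt_of_ne hr0 with hlt | hgt
    · nlinarith [sq_nonneg W, mul_pos (neg_pos.2 hlt) hq]
    · exact hgt
  -- Clearing denominators in `r = N / D` makes `(N * D) * Q` a square, `Q` the homogenized quadratic.
  obtain ⟨t, ht⟩ : ∃ t : ℚ, r = t ^ 2 ∨ r = 2 * t ^ 2 := by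
    obtain ⟨N, hN⟩ : ∃ N : ℕ, (N : ℤ) = r.num :=
      ⟨r.num.toNat, Int.toNat_of_nonneg (Rat.num_pos.2 hrpos).le⟩
    have hd : (r.den : ℚ) ≠ 0 := by exact_mod_cast r.den_ne_zero
    have hrN : r * r.den = N := by
      rw [Rat.mul_den_eq_num, ← hN]; rfl
    have hcop : IsCoprime (N : ℤ) (r.den : ℤ) := by
      rw [Nat.isCoprime_iff_coprime]
      have := r.reduced
      rw [← hN] at this
      exact this
    have hNpos : 0 < N := by
      have := Rat.num_pos.2 hrpos
      omega
    set D := r.den with hD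
    have hQ : (0 : ℤ) < 4 * N ^ 2 - 11 * N * D + 8 * D ^ 2 := by
      have : (0 : ℚ) < 4 * N ^ 2 - 11 * N * D + 8 * D ^ 2 := by
        rw [← hrN]
        have h5 : (0 : ℚ) < D ^ 2 := by positivity
        nlinarith [mul_pos hq h5]
      exact_mod_cast this
    obtain ⟨Q, hQ'⟩ := Int.eq_ofNat_of_zero_le hQ.le
    have hQq : (Q : ℚ) = 4 * N ^ 2 - 11 * N * D + 8 * D ^ 2 := by exact_mod_cast hQ'.symm
    have hsq : IsSquare (((N * D * Q : ℕ) : ℤ) : ℚ) := by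
      refine ⟨W * D ^ 2, ?_⟩
      push_cast
      rw [hQq, ← hrN]
      linear_combination (-(D : ℚ) ^ 4) * h1
    obtain ⟨w, hw⟩ := Int.isSquare_natCast_iff.1 (Rat.isSquare_intCast_iff.1 hsq)
    obtain ⟨s, hs⟩ := square_class (a := N * D) (b := Q) (w := w)
      (Nat.mul_pos hNpos r.den_pos) (by rw [hw]; ring) (by
        intro p hp h2 h3
        have hpz : Prime (p : ℤ) := Nat.prime_iff_prime_int.1 hp
        have h3' : (p : ℤ) ∣ 4 * N ^ 2 - 11 * N * D + 8 * D ^ 2 := by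
          rw [hQ']; exact Int.natCast_dvd_natCast.2 h3
        have two : ∀ k : ℕ, (p : ℤ) ∣ 2 ^ k → p = 2 := by
          intro k hk
          have : p ∣ 2 ^ k := by exact_mod_cast hk
          exact (Nat.prime_dvd_prime_iff_eq hp Nat.prime_two).1 (hp.dvd_of_dvd_pow this)
        rcases hp.dvd_mul.1 h2 with h4 | h4
        · have h5 : (p : ℤ) ∣ N := Int.natCast_dvd_natCast.2 h4
          have h6 : (p : ℤ) ∣ 2 ^ 3 * D ^ 2 := by
            have := dvd_sub h3' (h5.mul_right (4 * N - 11 * D : ℤ))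
            ring_nf at this ⊢
            exact this
          rcases hpz.dvd_or_dvd h6 with h7 | h7
          · exact two _ h7
          · exact absurd (hcop.isUnit_of_dvd' h5 (hpz.dvd_of_dvd_pow h7)) hpz.not_isUnit
        · have h5 : (p : ℤ) ∣ D := Int.natCast_dvd_natCast.2 h4
          have h6 : (p : ℤ) ∣ 2 ^ 2 * N ^ 2 := by
            have := dvd_sub h3' (h5.mul_right (8 * D - 11 * N : ℤ))
            ring_nf at this ⊢
            exact this
          rcases hpz.dvd_or_dvd h6 with h7 | h7
          · exact two _ h7
          · exact absurd (hcop.isUnit_of_dvd' (hpz.dvd_of_dvd_pow h7) h5) hpz.not_isUnit)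
    refine ⟨s / D, ?_⟩
    rw [div_pow]
    have hrD : r = (N * D : ℕ) / (D : ℚ) ^ 2 := by
      push_cast
      rw [← hrN]
      field_simp
    rcases hs with hs | hs
    · left; rw [hrD, hs]; push_cast; rfl
    · right; rw [hrD, hs]; push_cast; ring
  have ht0 : t ≠ 0 := by
    rintro rfl
    rcases ht with h | h <;> simp at h <;> exact hr0 h
  rcases ht with rfl | rfl
  · have h2 : t ^ 2 = 1 := by
      refine quartic_rat (z := W / t) ?_
      field_simp
      linear_combination h1
    right; left; rw [h2]; norm_num
  · have h2 : (t⁻¹) ^ 2 = 1 := by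
      refine quartic_rat (z := W / (2 * t ^ 3)) ?_
      field_simp
      linear_combination h1
    rw [inv_pow, inv_eq_one] at h2
    left; rw [h2]; norm_num

/-! ### Two cycles with different traces -/

/-- The cubic has no root modulo `2`, even projectively. -/
theorem shanks_no_root (t : ℚ) : t ^ 3 + t ^ 2 - 2 * t - 1 ≠ 0 := by
  intro h
  have ht : t * t.den = t.num := Rat.mul_den_eq_num t
  have h1 : (t.num : ℚ) ^ 3 + t.num ^ 2 * t.den - 2 * t.num * t.den ^ 2 - t.den ^ 3 = 0 := by
    rw [← ht]
    linear_combination (t.den : ℚ) ^ 3 * h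
  have h2 : t.num ^ 3 + t.num ^ 2 * t.den - 2 * t.num * t.den ^ 2 - (t.den : ℤ) ^ 3 = 0 := by
    exact_mod_cast h1
  have hc : IsCoprime t.num (t.den : ℤ) := by
    rw [Int.isCoprime_iff_nat_coprime]
    exact t.reduced
  have h3 : (2 : ℤ) ∣ t.num ∧ (2 : ℤ) ∣ t.den := by
    have h4 := congrArg (Int.cast : ℤ → ZMod 2) h2
    push_cast at h4
    have key : ∀ a b : ZMod 2, a ^ 3 + a ^ 2 * b - 2 * a * b ^ 2 - b ^ 3 = 0 → a = 0 ∧ b = 0 := by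
      decide
    obtain ⟨h5, h6⟩ := key _ _ h4
    exact ⟨(ZMod.intCast_zmod_eq_zero_iff_dvd _ 2).1 h5,
      (ZMod.intCast_zmod_eq_zero_iff_dvd _ 2).1 (by exact_mod_cast h6)⟩
  exact Int.prime_two.not_isUnit (hc.isUnit_of_dvd' h3.1 h3.2)

/-- Two rational 3-cycles cannot have different traces: `n` and `-2 - n` are not both of the form
`(s³ - 3s - 1) / (s(s + 1))`. -/
theorem traces_ne {τ t n : ℚ} (hτ0 : τ ≠ 0) (hτ1 : τ + 1 ≠ 0) (ht0 : t ≠ 0) (ht1 : t + 1 ≠ 0)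
    (h1 : τ ^ 3 - 3 * τ - 1 = n * (τ * (τ + 1)))
    (h2 : t ^ 3 - 3 * t - 1 = (-2 - n) * (t * (t + 1))) : False := by
  have hn : n + 1 ≠ 0 := by
    intro hn
    obtain rfl : n = -1 := by linarith
    exact shanks_no_root τ (by linear_combination h1)
  obtain ⟨u, hu⟩ : ∃ u, u = τ * t + τ + 1 := ⟨_, rfl⟩
  obtain ⟨v, hv⟩ : ∃ v, v = t - τ := ⟨_, rfl⟩
  obtain ⟨K, hK⟩ : ∃ K, K = τ * (τ + 1) * (t * (t + 1)) := ⟨_, rfl⟩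
  have hK0 : K ≠ 0 := by rw [hK]; positivity
  have hB : u * v * (u + v) = -K * (2 * (n + 1)) := by
    rw [hu, hv, hK]
    linear_combination τ * (τ + 1) * h2 - t * (t + 1) * h1
  -- `hA` and `hB` are the two coordinates, in the basis `1, -3ω`, of
  -- `(u - vω)³ = -K (n - 3ω)(n + 2 + 3ω̄)`.
  have hA : u ^ 3 - v ^ 3 - 3 * u * v ^ 2 = -K * (n ^ 2 - n - 9) := by
    rw [hu, hv, hK]
    linear_combination (t ^ 3 - 3 * t - 1 + 3 * (t * (t + 1))) * h1 + n * (τ * (τ + 1)) * h2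
  have hB0 : u * v * (u + v) ≠ 0 := by
    rw [hB]; exact mul_ne_zero (neg_ne_zero.2 hK0) (mul_ne_zero two_ne_zero hn)
  have hu0 : u ≠ 0 := by rintro h; simp [h] at hB0
  have hv0 : v ≠ 0 := by rintro h; simp [h] at hB0
  have hk0 : u + v ≠ 0 := by rintro h; simp [h] at hB0
  -- Eliminating `n` from `hA` and `hB` needs the discriminant of a quadratic in `n` to be a square.
  have hcurve : (K * (2 * (n + 1) * (2 * n - 1) - 2 * (n ^ 2 - n - 9))) ^ 2
      = (2 * (u + v) ^ 2 - u * v) * (2 * (u + v) ^ 4 - 5 * (u + v) ^ 2 * (u * v)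
        + 4 * (u * v) ^ 2) := by
    have e1 : (2 * (u + v) ^ 2 - u * v) * (2 * (u + v) ^ 4 - 5 * (u + v) ^ 2 * (u * v)
        + 4 * (u * v) ^ 2) = 4 * (u ^ 3 - v ^ 3 - 3 * u * v ^ 2) ^ 2
        + 12 * (u ^ 3 - v ^ 3 - 3 * u * v ^ 2) * (u * v * (u + v))
        + 37 * (u * v * (u + v)) ^ 2 := by ring
    rw [e1, hA, hB]; ring
  have hP := curve_rat (P := u * v / (u + v) ^ 2)
    (W := K * (2 * (n + 1) * (2 * n - 1) - 2 * (n ^ 2 - n - 9)) / (u + v) ^ 3) (by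
      field_simp
      linear_combination hcurve)
  -- `P = 0` forces `uv = 0`; `P = 1` and `P = 2` give definite quadratic forms vanishing at `(u, v)`.
  have hv2 : 0 < v ^ 2 := by positivity
  rcases hP with h | h | h
  · rw [div_eq_zero_iff] at h
    simp [hu0, hv0, hk0] at h
  · rw [div_eq_iff (by positivity)] at h
    nlinarith [sq_nonneg (2 * u + v)]
  · rw [div_eq_iff (by positivity)] at h
    nlinarith [sq_nonneg (4 * u + 3 * v)]

/-! ### Parametrization of 3-cycles -/

/-- The parameter of a point `x` of exact period 3 is `τ = x + f_c(x)`. -/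
theorem param_of_exactPeriod {c x : ℚ} (h : ExactPeriod (fc c) 3 x) :
    ∃ τ : ℚ, τ ≠ 0 ∧ τ + 1 ≠ 0 ∧
      c = -(τ^6 + 2*τ^5 + 4*τ^4 + 8*τ^3 + 9*τ^2 + 4*τ + 1) / (4*τ^2*(τ+1)^2) ∧
      x = (τ^3 + 2*τ^2 + τ + 1) / (2*τ*(τ+1)) := by
  obtain ⟨h3, hne⟩ := h
  have h1 := hne 1 (by norm_num) (by norm_num)
  have h2 := hne 2 (by norm_num) (by norm_num)
  simp only [Function.iterate_succ, Function.iterate_zero, Function.comp, id, fc] at h1 h2 h3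
  obtain ⟨y, hy⟩ : ∃ y, y = x ^ 2 + c := ⟨_, rfl⟩
  obtain ⟨z, hz⟩ : ∃ z, z = y ^ 2 + c := ⟨_, rfl⟩
  rw [← hy] at h1 h2 h3
  rw [← hz] at h2 h3
  have hyx : y - x ≠ 0 := sub_ne_zero.2 h1
  have e1 : z = y + (x + y) * (y - x) := by linear_combination hz - hy
  have hτ0 : x + y ≠ 0 := by
    intro h0
    have hzy : z = y := by rw [e1, h0]; ring
    apply h1
    rw [← h3, hzy, ← hz, hzy]
  have hτ1 : x + y + 1 ≠ 0 := by
    intro h0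
    apply h2
    linear_combination e1 + (y - x) * h0
  have e2 : (y + z) * (x + y) = -(1 + (x + y)) := by
    refine mul_right_cancel₀ hyx ?_
    linear_combination (-(y + z) - 1) * e1 + h3 + hz
  obtain ⟨τ, hτ⟩ : ∃ τ, τ = x + y := ⟨_, rfl⟩
  rw [← hτ] at hτ0 hτ1 e1 e2
  have hyτ : y = τ - x := by linarith
  have hx : x = (τ^3 + 2*τ^2 + τ + 1) / (2*τ*(τ+1)) := by
    rw [eq_div_iff (by positivity)]
    rw [e1, hyτ] at e2
    linear_combination -e2
  refine ⟨τ, hτ0, hτ1, ?_, hx⟩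
  have hc : c = τ - x - x ^ 2 := by linarith
  rw [hc, hx]
  field_simp
  ring

theorem exactPeriod_of_cycle {f : ℚ → ℚ} {a b d : ℚ} (hab : a ≠ b) (had : a ≠ d)
    (h1 : f a = b) (h2 : f b = d) (h3 : f d = a) : ExactPeriod f 3 a := by
  refine ⟨by simp [Function.iterate_succ, h1, h2, h3], fun k hk1 hk3 => ?_⟩
  interval_cases k
  · simpa [h1] using hab.symm
  · simpa [Function.iterate_succ, h1, h2] using had.symm

theorem cycle_of_param {c τ x₁ x₂ x₃ : ℚ} (h0 : τ ≠ 0) (h1 : τ + 1 ≠ 0)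
    (hc : c = -(τ^6 + 2*τ^5 + 4*τ^4 + 8*τ^3 + 9*τ^2 + 4*τ + 1) / (4*τ^2*(τ+1)^2))
    (hx₁ : x₁ = (τ^3 + 2*τ^2 + τ + 1) / (2*τ*(τ+1)))
    (hx₂ : x₂ = (τ^3 - τ - 1) / (2*τ*(τ+1)))
    (hx₃ : x₃ = -(τ^3 + 2*τ^2 + 3*τ + 1) / (2*τ*(τ+1))) :
    (x₁ ≠ x₂ ∧ x₁ ≠ x₃ ∧ x₂ ≠ x₃) ∧ fc c x₁ = x₂ ∧ fc c x₂ = x₃ ∧ fc c x₃ = x₁ := by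
  have hq : τ ^ 2 + τ + 1 ≠ 0 := by nlinarith [sq_nonneg (2 * τ + 1)]
  have d12 : x₁ - x₂ = (τ ^ 2 + τ + 1) / (τ * (τ + 1)) := by
    rw [hx₁, hx₂]; field_simp; ring
  have d13 : x₁ - x₃ = (τ ^ 2 + τ + 1) / τ := by
    rw [hx₁, hx₃]; field_simp; ring
  have d23 : x₂ - x₃ = (τ ^ 2 + τ + 1) / (τ + 1) := by
    rw [hx₂, hx₃]; field_simp; ring
  refine ⟨⟨sub_ne_zero.1 ?_, sub_ne_zero.1 ?_, sub_ne_zero.1 ?_⟩, ?_, ?_, ?_⟩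
  · rw [d12]; positivity
  · rw [d13]; positivity
  · rw [d23]; positivity
  · rw [fc, hx₁, hx₂, hc]; field_simp; ring
  · rw [fc, hx₂, hx₃, hc]; field_simp; ring
  · rw [fc, hx₃, hx₁, hc]; field_simp; ring

/-- Parameters with the same `c` lie in one orbit of the order 3 map `τ ↦ -(τ + 1)/τ`, which
moves the starting point of the cycle. -/
theorem param_unique {τ t : ℚ} (hτ0 : τ ≠ 0) (hτ1 : τ + 1 ≠ 0) (ht0 : t ≠ 0) (ht1 : t + 1 ≠ 0)
    (h : -(τ^6 + 2*τ^5 + 4*τ^4 + 8*τ^3 + 9*τ^2 + 4*τ + 1) / (4*τ^2*(τ+1)^2)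
      = -(t^6 + 2*t^5 + 4*t^4 + 8*t^3 + 9*t^2 + 4*t + 1) / (4*t^2*(t+1)^2)) :
    t = τ ∨ t = -(τ + 1) / τ ∨ t = -1 / (τ + 1) := by
  -- `n` is twice the sum of the points of the cycle, and `c` depends only on `n`.
  have trace : ∀ s : ℚ, s ≠ 0 → s + 1 ≠ 0 → ∃ n : ℚ, s ^ 3 - 3 * s - 1 = n * (s * (s + 1)) ∧
      -(s^6 + 2*s^5 + 4*s^4 + 8*s^3 + 9*s^2 + 4*s + 1) / (4*s^2*(s+1)^2)
        = -(n ^ 2 + 2 * n + 8) / 4 := by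
    intro s h0 h1
    refine ⟨(s ^ 3 - 3 * s - 1) / (s * (s + 1)), by field_simp, ?_⟩
    field_simp
    ring
  obtain ⟨n, hn, hcn⟩ := trace τ hτ0 hτ1
  obtain ⟨m, hm, hcm⟩ := trace t ht0 ht1
  rw [hcn, hcm] at h
  have h1 : (m - n) * (m + n + 2) = 0 := by linear_combination 4 * h
  rcases mul_eq_zero.1 h1 with h2 | h2
  · obtain rfl : m = n := by linarith
    have h3 : (t - τ) * ((τ * t + τ + 1) * ((τ + 1) * t + 1)) = 0 := by
      linear_combination τ * (τ + 1) * hm - t * (t + 1) * hn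
    rcases mul_eq_zero.1 h3 with h4 | h4
    · left; linarith
    rcases mul_eq_zero.1 h4 with h5 | h5
    · right; left; rw [eq_div_iff hτ0]; linarith
    · right; right; rw [eq_div_iff hτ1]; linarith
  · obtain rfl : m = -2 - n := by linarith
    exact (traces_ne hτ0 hτ1 ht0 ht1 hn hm).elim

/-- `f_c` has a rational point of exact period 3 iff
`c = -(τ⁶+2τ⁵+4τ⁴+8τ³+9τ²+4τ+1)/(4τ²(τ+1)²)` for some `τ ≠ 0, -1`; in that case the set of
rational points of exact period 3 is exactly the three-element set `{x₁, x₂, x₃}`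
and `f_c` permutes them cyclically. -/
theorem stmt_2 (c : ℚ) :
    ((∃ x : ℚ, ExactPeriod (fc c) 3 x) ↔
      ∃ τ : ℚ, τ ≠ 0 ∧ τ ≠ -1 ∧
        c = -(τ^6 + 2*τ^5 + 4*τ^4 + 8*τ^3 + 9*τ^2 + 4*τ + 1) / (4*τ^2*(τ+1)^2)) ∧
    (∀ τ : ℚ, τ ≠ 0 → τ ≠ -1 →
      c = -(τ^6 + 2*τ^5 + 4*τ^4 + 8*τ^3 + 9*τ^2 + 4*τ + 1) / (4*τ^2*(τ+1)^2) →
      ∀ x₁ x₂ x₃ : ℚ,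
        x₁ = (τ^3 + 2*τ^2 + τ + 1) / (2*τ*(τ+1)) →
        x₂ = (τ^3 - τ - 1) / (2*τ*(τ+1)) →
        x₃ = -(τ^3 + 2*τ^2 + 3*τ + 1) / (2*τ*(τ+1)) →
        {x : ℚ | ExactPeriod (fc c) 3 x} = {x₁, x₂, x₃} ∧
        x₁ ≠ x₂ ∧ x₁ ≠ x₃ ∧ x₂ ≠ x₃ ∧
        fc c x₁ = x₂ ∧ fc c x₂ = x₃ ∧ fc c x₃ = x₁) := by
  refine ⟨⟨?_, ?_⟩, ?_⟩
  · rintro ⟨x, hx⟩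
    obtain ⟨τ, h0, h1, hc, -⟩ := param_of_exactPeriod hx
    exact ⟨τ, h0, fun h => h1 (by rw [h]; norm_num), hc⟩
  · rintro ⟨τ, h0, h1, hc⟩
    have h1' : τ + 1 ≠ 0 := fun h => h1 (by linarith)
    obtain ⟨⟨h12, h13, -⟩, f1, f2, f3⟩ := cycle_of_param h0 h1' hc rfl rfl rfl
    exact ⟨_, exactPeriod_of_cycle h12 h13 f1 f2 f3⟩
  · intro τ h0 h1 hc x₁ x₂ x₃ hx₁ hx₂ hx₃
    have h1' : τ + 1 ≠ 0 := fun h => h1 (by linarith)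
    obtain ⟨⟨h12, h13, h23⟩, f1, f2, f3⟩ := cycle_of_param h0 h1' hc hx₁ hx₂ hx₃
    refine ⟨?_, h12, h13, h23, f1, f2, f3⟩
    ext y
    simp only [Set.mem_ofPred_eq, Set.mem_insert_iff, Set.mem_singleton_iff]
    constructor
    · intro hy
      obtain ⟨t, ht0, ht1, hct, rfl⟩ := param_of_exactPeriod hy
      rcases param_unique h0 h1' ht0 ht1 (hc.symm.trans hct) with rfl | ht | ht
      · exact Or.inl hx₁.symm
      · right; left
        have e : t + 1 = -1 / τ := by rw [ht]; field_simp; ring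
        rw [hx₂, e, ht]
        field_simp
        ring
      · right; right
        have e : t + 1 = τ / (τ + 1) := by rw [ht]; field_simp; ring
        rw [hx₃, e, ht]
        field_simp
        ring
    · rintro (rfl | rfl | rfl)
      · exact exactPeriod_of_cycle h12 h13 f1 f2 f3
      · exact exactPeriod_of_cycle h23 h12.symm f2 f3 f1
      · exact exactPeriod_of_cycle h13.symm h23.symm f3 f1 f2
end

section
/- Let c ∈ ℚ, f_c(z) = z² + c, and m ≥ 1. A point x ∈ ℚ is a rational point of type m₁ for f_c if and only if −x is a nonzero rational point of exact period m for f_c. -/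
open Function in
theorem exactPeriod_iff_minimalPeriod (f : ℚ → ℚ) {m : ℕ} (hm : 1 ≤ m) (x : ℚ) :
    ExactPeriod f m x ↔ minimalPeriod f x = m := by
  constructor
  · rintro ⟨h, hk⟩
    have hp : IsPeriodicPt f m x := h
    refine le_antisymm (hp.minimalPeriod_le hm) (not_lt.mp fun hlt => ?_)
    exact hk _ (hp.minimalPeriod_pos hm) hlt (isPeriodicPt_minimalPeriod f x)
  · rintro rfl
    refine ⟨isPeriodicPt_minimalPeriod f x, fun k hk hlt h => ?_⟩
    exact not_isPeriodicPt_of_pos_of_lt_minimalPeriod (by omega) hlt h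

open Function in
theorem isPeriodicPoint_iff_mem_periodicPts (f : ℚ → ℚ) (x : ℚ) :
    IsPeriodicPoint f x ↔ x ∈ periodicPts f := by
  rw [← minimalPeriod_pos_iff_mem_periodicPts]
  constructor
  · rintro ⟨m, hm, h⟩
    rw [(exactPeriod_iff_minimalPeriod f hm x).1 h]
    exact hm
  · exact fun h => ⟨_, h, (exactPeriod_iff_minimalPeriod f h x).2 rfl⟩

theorem fc_neg (c x : ℚ) : fc c (-x) = fc c x := by simp [fc]

theorem fc_eq_iff (c x y : ℚ) : fc c x = fc c y ↔ x = y ∨ x = -y := by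
  simp [fc, sq_eq_sq_iff_eq_or_eq_neg]

/-- for `m ≥ 1`, `x` is a rational point of type `m₁` for `f_c` iff `-x` is a
nonzero rational point of exact period `m` for `f_c`. -/
theorem stmt_5 (c : ℚ) (m : ℕ) (hm : 1 ≤ m) (x : ℚ) :
    HasType (fc c) m 1 x ↔ (-x ≠ 0 ∧ ExactPeriod (fc c) m (-x)) := by
  have htype : HasType (fc c) m 1 x ↔
      Function.minimalPeriod (fc c) (fc c x) = m ∧ x ∉ Function.periodicPts (fc c) := by
    simp [HasType, exactPeriod_iff_minimalPeriod _ hm, isPeriodicPoint_iff_mem_periodicPts]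
  rw [htype, exactPeriod_iff_minimalPeriod _ hm]
  constructor
  · rintro ⟨h, hx⟩
    have hfx : fc c x ∈ Function.periodicPts (fc c) :=
      Function.minimalPeriod_pos_iff_mem_periodicPts.1 (by omega)
    obtain ⟨y, hy, hyx⟩ := (Function.bijOn_periodicPts (fc c)).surjOn hfx
    rcases (fc_eq_iff c y x).1 hyx with rfl | rfl
    · exact absurd hy hx
    · refine ⟨fun h0 => hx ?_, ?_⟩
      · rwa [h0, ← neg_eq_zero.1 h0] at hy
      · rw [← Function.minimalPeriod_apply hy, hyx, h]
  · rintro ⟨h0, h⟩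
    have hnx : -x ∈ Function.periodicPts (fc c) :=
      Function.minimalPeriod_pos_iff_mem_periodicPts.1 (by omega)
    refine ⟨by rw [← fc_neg, Function.minimalPeriod_apply hnx, h], fun hx => h0 ?_⟩
    have := (Function.bijOn_periodicPts (fc c)).injOn hnx hx (fc_neg c x)
    linarith
end

section
/- Let c ∈ ℚ and f_c(z) = z² + c. Then f_c has a rational point of type 1₂ if and only if c = −2(η² + 1)/(η² − 1)² for some η ∈ ℚ with η ≠ −1 and η ≠ 1. In that case the set of rational points of type 1₂ for f_c is exactly {2η/(η² − 1), −2η/(η² − 1)} (these two coincide exactly when η = 0, i.e., c = −2), and f_c has a rational fixed point; indeed c = 1/4 − ρ² with ρ = −(η² + 3)/(2(η² − 1)). -/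
/-! ### Infinite descent for `a² + d²`, `a² + 4d²` -/

/-- Parametrization of primitive Pythagorean triples with odd leg `x`, without a sign condition on
the hypotenuse. -/
theorem pyth_param {x y z : ℤ} (hx : x % 2 = 1) (hc : IsCoprime x y)
    (h : x ^ 2 + y ^ 2 = z ^ 2) :
    ∃ m n : ℤ, x = m ^ 2 - n ^ 2 ∧ y = 2 * m * n ∧ IsCoprime m n := by
  have hx0 : x ≠ 0 := by rintro rfl; norm_num at hx
  have hz : z ≠ 0 := by
    rintro rfl
    have : 0 < x ^ 2 := by positivity
    nlinarith [sq_nonneg y]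
  have ht : PythagoreanTriple x y |z| := by
    unfold PythagoreanTriple
    rw [abs_mul_abs_self]; linarith
  obtain ⟨m, n, h1, h2, -, h4, -⟩ :=
    ht.coprime_classification' (Int.isCoprime_iff_gcd_eq_one.mp hc) hx (abs_pos.mpr hz)
  exact ⟨m, n, h1, h2, Int.isCoprime_iff_gcd_eq_one.mpr h4⟩

/-- If `gcd(β, γ) = gcd(α, δ) = 1`, the two forms below agree with `γ²` and `β²` up to a
common factor dividing `3`, and `3` cannot divide `α² + δ²`. -/
theorem forms_eq_squares {α β γ δ : ℤ} (hb : IsCoprime β γ) (ha : IsCoprime α δ)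
    (hγ : γ ≠ 0) (h : β ^ 2 * (α ^ 2 + δ ^ 2) = γ ^ 2 * (α ^ 2 + 4 * δ ^ 2)) :
    α ^ 2 + δ ^ 2 = γ ^ 2 ∧ α ^ 2 + 4 * δ ^ 2 = β ^ 2 := by
  have hb2 : IsCoprime (γ ^ 2) (β ^ 2) := hb.symm.pow
  obtain ⟨k, hk⟩ : γ ^ 2 ∣ α ^ 2 + δ ^ 2 := hb2.dvd_of_dvd_mul_left ⟨_, h⟩
  have hk' : α ^ 2 + 4 * δ ^ 2 = β ^ 2 * k := by
    apply mul_left_cancel₀ (pow_ne_zero 2 hγ)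
    rw [← h, hk]; ring
  have h3 : k ∣ 3 := by
    have e1 : k ∣ 3 * δ ^ 2 := ⟨β ^ 2 - γ ^ 2, by linear_combination hk' - hk⟩
    have e2 : k ∣ 3 * α ^ 2 := ⟨4 * γ ^ 2 - β ^ 2, by linear_combination 4 * hk - hk'⟩
    obtain ⟨s, t, hst⟩ : IsCoprime (α ^ 2) (δ ^ 2) := ha.pow
    have : (3 : ℤ) = s * (3 * α ^ 2) + t * (3 * δ ^ 2) := by linear_combination -3 * hst
    rw [this]
    exact dvd_add (e2.mul_left _) (e1.mul_left _)
  have hpos : 0 < k := by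
    have h0 : α ^ 2 + δ ^ 2 ≠ 0 := by
      intro h0
      have h1 : α = 0 := by nlinarith [sq_nonneg α, sq_nonneg δ]
      have h2 : δ = 0 := by nlinarith [sq_nonneg α, sq_nonneg δ]
      rw [h1, h2] at ha
      exact not_isCoprime_zero_zero ha
    have : 0 < γ ^ 2 * k := by
      rw [← hk]; exact lt_of_le_of_ne (by positivity) (Ne.symm h0)
    exact pos_of_mul_pos_right this (by positivity)
  have hle := Int.le_of_dvd (by norm_num) h3
  interval_cases k
  · exact ⟨by rw [hk, mul_one], by rw [hk', mul_one]⟩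
  · norm_num at h3
  · exfalso
    have m3 : (α ^ 2 + δ ^ 2) % 3 = 0 := by rw [hk]; simp
    have hα : α % 3 = 0 ∧ δ % 3 = 0 := by
      rcases (by omega : α % 3 = 0 ∨ α % 3 = 1 ∨ α % 3 = 2) with e | e | e <;>
      rcases (by omega : δ % 3 = 0 ∨ δ % 3 = 1 ∨ δ % 3 = 2) with f | f | f <;>
      first
      | exact ⟨e, f⟩
      | simp [pow_two, Int.add_emod, Int.mul_emod, e, f] at m3
    have := ha.isUnit_of_dvd' (Int.dvd_of_emod_eq_zero hα.1) (Int.dvd_of_emod_eq_zero hα.2)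
    rw [Int.isUnit_iff] at this
    omega

/-- The half of the descent with `R` odd: writing `R = αβ`, `S = 2γδ`, `r = αγ`, `s = βδ`
turns the system into `β²(α² + δ²) = γ²(α² + 4δ²)`. -/
theorem descent_step_odd {R S r s : ℤ} (hRS : IsCoprime R S) (hrs : IsCoprime r s)
    (h1 : R ^ 2 - S ^ 2 = r ^ 2 - s ^ 2) (h2 : R * S = 2 * (r * s)) (hR : R % 2 = 1)
    (h0 : r * s ≠ 0) :
    ∃ α δ β γ : ℤ, IsCoprime α δ ∧ α * δ ∣ r * s ∧
      α ^ 2 + δ ^ 2 = γ ^ 2 ∧ α ^ 2 + 4 * δ ^ 2 = β ^ 2 := by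
  have hS : S % 2 = 0 := by
    have h : (R * S) % 2 = 0 := by rw [h2]; simp
    rw [Int.mul_emod, hR] at h
    omega
  obtain ⟨S', rfl⟩ := Int.dvd_of_emod_eq_zero hS
  have h3 : R * S' = r * s := by linarith
  obtain ⟨α, β, ⟨γ, rfl⟩, ⟨δ, rfl⟩, rfl⟩ := exists_dvd_and_dvd_of_dvd_mul (Dvd.intro _ h3)
  have hα : α ≠ 0 := by rintro rfl; simp at h0
  have hβ : β ≠ 0 := by rintro rfl; simp at h0
  have hγ : γ ≠ 0 := by rintro rfl; simp at h0
  have h4 : S' = γ * δ := by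
    apply mul_left_cancel₀ (mul_ne_zero hα hβ)
    rw [h3]; ring
  subst h4
  have cαδ : IsCoprime α δ := hrs.of_mul_left_left.of_mul_right_right
  have cβγ : IsCoprime β γ := hRS.of_mul_left_right.of_mul_right_right.of_mul_right_left
  obtain ⟨e1, e2⟩ := forms_eq_squares cβγ cαδ hγ (by linear_combination h1)
  exact ⟨α, δ, β, γ, cαδ, ⟨γ * β, by ring⟩, e1, e2⟩

/-- A nontrivial solution of the system yields a coprime pair `α, δ` dividing `rs` for which both
forms are squares. Exactly one of `R`, `S` is odd, and the system is symmetric under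
`(R, S, r, s) ↦ (S, R, s, r)`. -/
theorem descent_step {R S r s : ℤ} (hRS : IsCoprime R S) (hrs : IsCoprime r s)
    (h1 : R ^ 2 - S ^ 2 = r ^ 2 - s ^ 2) (h2 : R * S = 2 * (r * s)) (h0 : r * s ≠ 0) :
    ∃ α δ β γ : ℤ, IsCoprime α δ ∧ α * δ ∣ r * s ∧
      α ^ 2 + δ ^ 2 = γ ^ 2 ∧ α ^ 2 + 4 * δ ^ 2 = β ^ 2 := by
  rcases Int.emod_two_eq_zero_or_one R with hR | hR
  · have hS : S % 2 = 1 := by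
      by_contra hS
      have := hRS.isUnit_of_dvd' (Int.dvd_of_emod_eq_zero hR)
        (Int.dvd_of_emod_eq_zero (by omega))
      rw [Int.isUnit_iff] at this
      omega
    have := descent_step_odd hRS.symm hrs.symm (by linarith) (by linarith) hS
      (by rwa [mul_comm])
    rwa [mul_comm s r] at this
  · exact descent_step_odd hRS hrs h1 h2 hR h0

/-- The forms `a² + d²` and `a² + 4d²` are simultaneously squares only for `ad = 0`, by
infinite descent on `|ad|`. -/
theorem concordant_one_four : ∀ (N : ℕ) (a d b c : ℤ), (a * d).natAbs = N → IsCoprime a d →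
    a ^ 2 + d ^ 2 = c ^ 2 → a ^ 2 + 4 * d ^ 2 = b ^ 2 → a * d = 0 := by
  intro N
  induction N using Nat.strong_induction_on with
  | _ N ih =>
  intro a d b c hN hc h1 h2
  by_contra h0
  rcases Int.emod_two_eq_zero_or_one a with ha | ha
  · -- for `a = 2a'` even, `(d, a')` is a smaller solution
    obtain ⟨a', rfl⟩ := Int.dvd_of_emod_eq_zero ha
    have hb : (2 : ℤ) ∣ b :=
      Int.prime_two.dvd_of_dvd_pow (n := 2) ⟨2 * (a' ^ 2 + d ^ 2), by linarith⟩
    obtain ⟨b', rfl⟩ := hb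
    have h3 : d * a' ≠ 0 := fun h => h0 (by linear_combination 2 * h)
    refine h3 (ih (d * a').natAbs ?_ d a' c b' rfl hc.symm.of_mul_right_right
      (by linarith) (by linarith))
    have : 2 * a' * d = 2 * (d * a') := by ring
    rw [this] at hN
    omega
  · obtain ⟨r, s, e1, e2, crs⟩ := pyth_param ha hc h1
    have c2 : IsCoprime a (2 * d) := by
      refine IsCoprime.mul_right ?_ hc
      exact ⟨1, -(a / 2), by omega⟩
    obtain ⟨R, S, f1, f2, cRS⟩ := pyth_param (z := b) ha c2 (by linarith)
    have hd : d ≠ 0 := right_ne_zero_of_mul h0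
    have ha0 : a ≠ 0 := left_ne_zero_of_mul h0
    have hrs : r * s ≠ 0 := fun h => hd (by linear_combination e2 + 2 * h)
    obtain ⟨α, δ, β, γ, cαδ, hdvd, g1, g2⟩ :=
      descent_step cRS crs (by linarith) (by linarith) hrs
    have hne : α * δ ≠ 0 := by
      intro h
      rw [h, zero_dvd_iff] at hdvd
      exact hrs hdvd
    refine hne (ih (α * δ).natAbs ?_ α δ β γ rfl cαδ g1 g2)
    have hle := Int.natAbs_le_of_dvd_ne_zero hdvd hrs
    have hd2 : d.natAbs = 2 * (r * s).natAbs := by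
      rw [e2, mul_assoc, Int.natAbs_mul]; rfl
    have hapos : 1 ≤ a.natAbs := by omega
    rw [Int.natAbs_mul] at hN
    have := Nat.le_mul_of_pos_left d.natAbs hapos
    omega

theorem system_trivial {R S r s : ℤ} (hRS : IsCoprime R S) (hrs : IsCoprime r s)
    (h1 : R ^ 2 - S ^ 2 = r ^ 2 - s ^ 2) (h2 : R * S = 2 * (r * s)) : r * s = 0 := by
  by_contra h0
  obtain ⟨α, δ, β, γ, cαδ, hdvd, g1, g2⟩ := descent_step hRS hrs h1 h2 h0
  rw [concordant_one_four _ α δ β γ rfl cαδ g1 g2, zero_dvd_iff] at hdvd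
  exact h0 hdvd

/-! ### The quartic `x⁴ - x²y² + y⁴ = z²` and squares in arithmetic progression -/

theorem quartic_coprime {x y z : ℤ} (hc : IsCoprime x y)
    (h : x ^ 4 - x ^ 2 * y ^ 2 + y ^ 4 = z ^ 2) : x * y = 0 ∨ x ^ 2 = y ^ 2 := by
  have c1 : IsCoprime (x ^ 2 - y ^ 2) x := by
    have : IsCoprime x (y ^ 2) := hc.pow_right
    have := (this.neg_right.add_mul_left_right x).symm
    rwa [show -y ^ 2 + x * x = x ^ 2 - y ^ 2 by ring] at this
  have c2 : IsCoprime (x ^ 2 - y ^ 2) y := by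
    have : IsCoprime y (x ^ 2) := hc.symm.pow_right
    have := (this.add_mul_left_right (-y)).symm
    rwa [show x ^ 2 + y * -y = x ^ 2 - y ^ 2 by ring] at this
  have cc : IsCoprime (x ^ 2 - y ^ 2) (x * y) := c1.mul_right c2
  rcases Int.emod_two_eq_zero_or_one (x ^ 2 - y ^ 2) with hp | hp
  · -- here `x` and `y` are both odd
    right
    have hxy : (x * y) % 2 = 1 := by
      by_contra hS
      have := cc.isUnit_of_dvd' (Int.dvd_of_emod_eq_zero hp)
        (Int.dvd_of_emod_eq_zero (by omega))
      rw [Int.isUnit_iff] at this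
      omega
    obtain ⟨m, n, e1, e2, cmn⟩ := pyth_param (z := z) hxy cc.symm (by linear_combination h)
    obtain ⟨hx, hy⟩ := Int.odd_mul.mp (Int.odd_iff.mpr hxy)
    obtain ⟨s, hs⟩ := (hx.add_odd hy).two_dvd
    obtain ⟨t, ht⟩ := (hx.sub_odd hy).two_dvd
    have ex : x = s + t := by linarith
    have ey : y = s - t := by linarith
    subst ex ey
    have cst : IsCoprime s t := by
      obtain ⟨p, q, hpq⟩ := hc
      exact ⟨p + q, p - q, by linear_combination hpq⟩
    have := system_trivial cmn cst (by linear_combination -e1) (by linarith)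
    linear_combination 4 * this
  · left
    obtain ⟨m, n, e1, e2, cmn⟩ := pyth_param (z := z) hp cc (by linear_combination h)
    have := system_trivial hc cmn e1 (by linarith)
    linear_combination e2 + 2 * this

theorem quartic {x y z : ℤ} (h : x ^ 4 - x ^ 2 * y ^ 2 + y ^ 4 = z ^ 2) :
    x * y = 0 ∨ x ^ 2 = y ^ 2 := by
  by_cases hg : Int.gcd x y = 0
  · left
    rw [Int.gcd_eq_zero_iff] at hg
    simp [hg.1]
  obtain ⟨x', y', hc, hx, hy⟩ := Int.exists_gcd_one (Nat.pos_of_ne_zero hg)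
  set g : ℤ := (Int.gcd x y : ℤ) with hgdef
  have hg0 : g ≠ 0 := by rw [hgdef]; exact_mod_cast hg
  rw [hx, hy] at h
  obtain ⟨z', rfl⟩ : g ^ 2 ∣ z := by
    rw [← Int.pow_dvd_pow_iff (n := 2) two_ne_zero]
    exact ⟨x' ^ 4 - x' ^ 2 * y' ^ 2 + y' ^ 4, by linear_combination -h⟩
  have h' : x' ^ 4 - x' ^ 2 * y' ^ 2 + y' ^ 4 = z' ^ 2 := by
    apply mul_left_cancel₀ (pow_ne_zero 4 hg0)
    linear_combination h
  rw [hx, hy]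
  rcases quartic_coprime (Int.isCoprime_iff_gcd_eq_one.mpr hc) h' with e | e
  · left; linear_combination g ^ 2 * e
  · right; linear_combination g ^ 2 * e

/-- Fermat: four integer squares `v², b², u², a²` in arithmetic progression are equal. -/
theorem four_squares {v b u a : ℤ} (h1 : u ^ 2 + v ^ 2 = 2 * b ^ 2)
    (h2 : a ^ 2 + b ^ 2 = 2 * u ^ 2) : a ^ 2 = b ^ 2 := by
  -- With `P, Q = u ± v` and `R, S = a ± b`, the hypotheses become `PQ = RS` and
  -- `(P + Q)² = R² + S²`. Eliminating `Q` leaves a quadratic equation in `S` whose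
  -- discriminant must be a square; up to a square factor it is `R⁴ - R²P² + P⁴`.
  by_cases hP : u + v = 0
  · have : u = -v := by linarith
    subst this; linarith
  have key : ((a - b) * ((a + b) ^ 2 - (u + v) ^ 2) + (a + b) * (u + v) ^ 2) ^ 2 =
      (u + v) ^ 2 * ((a + b) ^ 4 - (a + b) ^ 2 * (u + v) ^ 2 + (u + v) ^ 4) := by
    have hPQ : (u + v) * (u - v) = (a + b) * (a - b) := by linear_combination -h1 - h2
    have hsum : (u + v) ^ 2 + (u - v) ^ 2 + 2 * ((u + v) * (u - v)) =
      (a + b) ^ 2 + (a - b) ^ 2 := by linear_combination -2 * h2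
    generalize u + v = P at *
    generalize u - v = Q at *
    generalize a + b = R at *
    generalize a - b = S at *
    have hq : S ^ 2 * (R ^ 2 - P ^ 2) + 2 * R * P ^ 2 * S + P ^ 2 * (P ^ 2 - R ^ 2) = 0 := by
      linear_combination P ^ 2 * hsum - (P * Q + R * S + 2 * P ^ 2) * hPQ
    linear_combination (R ^ 2 - P ^ 2) * hq
  obtain ⟨z, hz⟩ : (u + v) ∣ ((a - b) * ((a + b) ^ 2 - (u + v) ^ 2) + (a + b) * (u + v) ^ 2) := by
    rw [← Int.pow_dvd_pow_iff (n := 2) two_ne_zero]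
    exact ⟨_, key⟩
  rw [hz, mul_pow] at key
  have hq := mul_left_cancel₀ (pow_ne_zero 2 hP) key
  rcases quartic hq.symm with e | e
  · have e' := (mul_eq_zero.mp e).resolve_right hP
    linear_combination (a - b) * e'
  · have f : (u + v) ^ 2 * (u - v) ^ 2 = (u + v) ^ 2 * (a - b) ^ 2 := by
      have hD : u ^ 2 - v ^ 2 = a ^ 2 - b ^ 2 := by linear_combination -h1 - h2
      calc (u + v) ^ 2 * (u - v) ^ 2 = (u ^ 2 - v ^ 2) ^ 2 := by ring
        _ = (a + b) ^ 2 * (a - b) ^ 2 := by rw [hD]; ring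
        _ = (u + v) ^ 2 * (a - b) ^ 2 := by rw [e]
    have f' := mul_left_cancel₀ (pow_ne_zero 2 hP) f
    linarith

/-- The genus-one curve `y² = (η² + 1)(3 - η²)` has no rational points beyond `η = ±1`. -/
theorem curve_points {η y : ℚ} (h : y ^ 2 = (η ^ 2 + 1) * (3 - η ^ 2)) : η ^ 2 = 1 := by
  have hb0 : (η.den : ℤ) ≠ 0 := by exact_mod_cast η.den_nz
  have hbq : (η.den : ℚ) ≠ 0 := by exact_mod_cast η.den_nz
  have hcop : IsCoprime η.num (η.den : ℤ) := Rat.isCoprime_num_den η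
  have hη : η = η.num / (η.den : ℤ) := by simpa using (Rat.num_div_den η).symm
  generalize η.num = a at *
  generalize (η.den : ℤ) = b at *
  have hbq : (b : ℚ) ≠ 0 := by exact_mod_cast hb0
  have hsq : IsSquare (((a ^ 2 + b ^ 2) * (3 * b ^ 2 - a ^ 2) : ℤ) : ℚ) := by
    refine ⟨y * b ^ 2, ?_⟩
    have : y * b ^ 2 * (y * b ^ 2) = y ^ 2 * b ^ 4 := by ring
    rw [this, h, hη]
    push_cast
    field_simp
  rw [Rat.isSquare_intCast_iff] at hsq
  obtain ⟨w, hw⟩ := hsq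
  suffices hab : a ^ 2 = b ^ 2 by
    rw [hη, div_pow, div_eq_one_iff_eq (by positivity)]
    exact_mod_cast hab
  have hpar : a % 2 = 1 ∧ b % 2 = 1 := by
    by_contra hne
    have hnot : ¬ (a % 2 = 0 ∧ b % 2 = 0) := by
      rintro ⟨ha, hb⟩
      have := hcop.isUnit_of_dvd' (Int.dvd_of_emod_eq_zero ha) (Int.dvd_of_emod_eq_zero hb)
      rw [Int.isUnit_iff] at this
      omega
    -- for `a`, `b` of opposite parity the left side is `3` modulo `4`
    have h4 := congrArg (· % 4) hw
    simp only [pow_two] at h4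
    rcases (by omega : a % 4 = 0 ∨ a % 4 = 1 ∨ a % 4 = 2 ∨ a % 4 = 3) with e | e | e | e <;>
    rcases (by omega : b % 4 = 0 ∨ b % 4 = 1 ∨ b % 4 = 2 ∨ b % 4 = 3) with f | f | f | f <;>
    first
    | omega
    | rcases (by omega : w % 4 = 0 ∨ w % 4 = 1 ∨ w % 4 = 2 ∨ w % 4 = 3) with g | g | g | g <;>
      simp [Int.add_emod, Int.sub_emod, Int.mul_emod, e, f, g] at h4
  obtain ⟨k, rfl⟩ : ∃ k, a = 2 * k + 1 := ⟨a / 2, by omega⟩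
  obtain ⟨l, rfl⟩ : ∃ l, b = 2 * l + 1 := ⟨b / 2, by omega⟩
  set A : ℤ := 2 * (k ^ 2 + k + l ^ 2 + l) + 1 with hA
  set B : ℤ := 6 * (l ^ 2 + l) - 2 * (k ^ 2 + k) + 1 with hB
  have hA2 : (2 * k + 1) ^ 2 + (2 * l + 1) ^ 2 = 2 * A := by rw [hA]; ring
  have hB2 : 3 * (2 * l + 1) ^ 2 - (2 * k + 1) ^ 2 = 2 * B := by rw [hB]; ring
  rw [hA2, hB2] at hw
  obtain ⟨w', rfl⟩ : (2 : ℤ) ∣ w :=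
    Int.prime_two.dvd_of_dvd_pow (n := 2) ⟨2 * A * B, by linarith⟩
  have hAB : A * B = w' ^ 2 := by linarith
  have hcAB : IsCoprime A B := by
    obtain ⟨s, t, hst⟩ : IsCoprime ((2 * k + 1) ^ 2) ((2 * l + 1) ^ 2) := hcop.pow
    have c2 : IsCoprime A (2 : ℤ) := ⟨1, -(k ^ 2 + k + l ^ 2 + l), by rw [hA]; ring⟩
    obtain ⟨p, q, hpq⟩ := c2
    have e1 : A + B = 2 * (2 * l + 1) ^ 2 := by linarith
    have e2 : 3 * A - B = 2 * (2 * k + 1) ^ 2 := by linarith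
    exact ⟨p + q * (3 * s + t), q * (t - s),
      by linear_combination hpq + q * s * e2 + q * t * e1 + 2 * q * hst⟩
  have hApos : 0 < A := by
    have : 0 < (2 * l + 1) ^ 2 := by positivity
    linarith [sq_nonneg (2 * k + 1)]
  have hBnn : 0 ≤ B := by
    by_contra hneg
    nlinarith [sq_nonneg w', mul_pos hApos (by linarith : 0 < -B)]
  obtain ⟨u, hu⟩ := Int.sq_of_isCoprime hcAB hAB
  obtain ⟨v, hv⟩ := Int.sq_of_isCoprime hcAB.symm (by rw [mul_comm]; exact hAB)
  have hu' : A = u ^ 2 := by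
    rcases hu with e | e
    · exact e
    · nlinarith [sq_nonneg u]
  have hv' : B = v ^ 2 := by
    rcases hv with e | e
    · exact e
    · nlinarith [sq_nonneg v]
  exact four_squares (v := v) (u := u) (by linarith) (by linarith)

/-! ### Points of type `1₂` -/

/-- A point `x` of type `1₂` runs through `x ↦ -p ↦ p ↦ p` for a fixed point `p ≠ 0`. -/
theorem hasType_one_two_iff (c x : ℚ) :
    HasType (fc c) 1 2 x ↔ ∃ p : ℚ, p ≠ 0 ∧ p ^ 2 + c = p ∧ x ^ 2 + c = -p := by
  constructor
  · rintro ⟨⟨h1, -⟩, h2⟩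
    simp only [Function.iterate_succ, Function.iterate_zero, Function.comp, id] at h1
    set w := fc c x with hw
    set p := fc c w with hp
    have hpp : p ^ 2 + c = p := h1
    have hwp : w ^ 2 + c = p := rfl
    have hne : w ≠ p := by
      intro e
      refine h2 1 (by norm_num) ⟨1, le_rfl, ?_, by omega⟩
      simp only [Function.iterate_succ, Function.iterate_zero, Function.comp, id]
      exact hp.symm.trans e.symm
    have hwneg : w = -p :=
      (sq_eq_sq_iff_eq_or_eq_neg.mp (by linarith : w ^ 2 = p ^ 2)).resolve_left hne
    refine ⟨p, ?_, hpp, hwneg⟩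
    rintro e
    rw [e] at hwneg hne
    exact hne (by simpa using hwneg)
  · rintro ⟨p, hp0, hp, hx⟩
    have fp : fc c p = p := hp
    have fx : fc c x = -p := hx
    have fn : fc c (-p) = p := by simpa [fc] using hp
    have hfix : ∀ n, (fc c)^[n] p = p := fun n => Function.iterate_fixed fp n
    have hnn : -p ≠ p := fun e => hp0 (by linarith)
    -- a periodic point that is eventually sent to `p` equals `p`
    have hper : ∀ w, (fc c)^[2] w = p → IsPeriodicPoint (fc c) w → w = p := by
      rintro w hw ⟨m, hm, hmw, -⟩
      have h2 : (fc c)^[m * 2] w = w := by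
        rw [mul_two, Function.iterate_add_apply, hmw, hmw]
      obtain ⟨j, rfl⟩ : ∃ j, m = j + 1 := ⟨m - 1, by omega⟩
      rw [show (j + 1) * 2 = 2 * j + 2 by ring, Function.iterate_add_apply, hw, hfix] at h2
      exact h2.symm
    have hx2 : (fc c)^[2] x = p := by simp [fx, fn]
    refine ⟨⟨by rw [hx2]; exact hfix 1, by omega⟩, ?_⟩
    intro k hk hP
    interval_cases k
    · have : x = p := hper x hx2 hP
      rw [this, fp] at fx
      exact hnn fx.symm
    · have e : (fc c)^[1] x = -p := fx
      rw [e] at hP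
      exact hnn (hper (-p) (by simp [fn, fp]) hP)

theorem denom_ne_zero {η : ℚ} (h1 : η ≠ -1) (h2 : η ≠ 1) : η ^ 2 - 1 ≠ 0 := by
  have : η ^ 2 - 1 = (η - 1) * (η + 1) := by ring
  rw [this]
  exact mul_ne_zero (sub_ne_zero.mpr h2) (fun e => h1 (by linarith))

/-- `f_c` has a rational point of type `1₂` iff `c = -2(η²+1)/(η²-1)²` for some
`η ≠ ±1`; in that case the set of rational points of type `1₂` is exactly
`{2η/(η²-1), -2η/(η²-1)}` (the two coinciding exactly when `η = 0`, i.e. `c = -2`),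
and `c = 1/4 - ρ²` with `ρ = -(η²+3)/(2(η²-1))` (so `f_c` has a rational fixed point). -/
theorem stmt_7 (c : ℚ) :
    ((∃ x : ℚ, HasType (fc c) 1 2 x) ↔
      ∃ η : ℚ, η ≠ -1 ∧ η ≠ 1 ∧ c = -2*(η^2 + 1) / (η^2 - 1)^2) ∧
    (∀ η : ℚ, η ≠ -1 → η ≠ 1 → c = -2*(η^2 + 1) / (η^2 - 1)^2 →
      {x : ℚ | HasType (fc c) 1 2 x} = {2*η / (η^2 - 1), -(2*η) / (η^2 - 1)} ∧
      ((2*η / (η^2 - 1) : ℚ) = -(2*η) / (η^2 - 1) ↔ η = 0) ∧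
      (η = 0 ↔ c = -2) ∧
      c = 1/4 - (-(η^2 + 3) / (2*(η^2 - 1)))^2 ∧
      (∃ x : ℚ, fc c x = x)) := by
  constructor
  · constructor
    · rintro ⟨x, hx⟩
      obtain ⟨p, hp0, hp, hxp⟩ := (hasType_one_two_iff c x).mp hx
      -- slope parametrization of the conic `x² = p² - 2p` from the origin
      have hη : (-x / p) ^ 2 - 1 = -2 / p := by
        field_simp
        linear_combination hxp - hp
      have hne : (-x / p) ^ 2 - 1 ≠ 0 := by
        rw [hη]; exact div_ne_zero (by norm_num) hp0
      refine ⟨-x / p, ?_, ?_, ?_⟩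
      · intro e; rw [e] at hne; norm_num at hne
      · intro e; rw [e] at hne; norm_num at hne
      · have : (-x / p) ^ 2 + 1 = 2 - 2 / p := by linear_combination hη
        rw [hη, this]
        field_simp
        linear_combination hp
    · rintro ⟨η, h1, h2, hc⟩
      have hD := denom_ne_zero h1 h2
      refine ⟨2 * η / (η ^ 2 - 1), (hasType_one_two_iff c _).mpr ⟨-2 / (η ^ 2 - 1), ?_, ?_, ?_⟩⟩
      · exact div_ne_zero (by norm_num) hD
      · rw [hc]; field_simp; ring
      · rw [hc]; field_simp; ring
  · intro η h1 h2 hc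
    have hD := denom_ne_zero h1 h2
    have hη1 : η ^ 2 ≠ 1 := fun e => hD (by linarith)
    refine ⟨?_, ?_, ?_, ?_, ?_⟩
    · ext x
      simp only [Set.mem_ofPred_eq, Set.mem_insert_iff, Set.mem_singleton_iff]
      rw [hasType_one_two_iff]
      constructor
      · rintro ⟨p, hp0, hp, hx⟩
        have hfac : (p + 2 / (η ^ 2 - 1)) * (p - (η ^ 2 + 1) / (η ^ 2 - 1)) = 0 := by
          have : (p + 2 / (η ^ 2 - 1)) * (p - (η ^ 2 + 1) / (η ^ 2 - 1)) =
              p ^ 2 - p + -2 * (η ^ 2 + 1) / (η ^ 2 - 1) ^ 2 := by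
            field_simp; ring
          rw [this, ← hc]; linarith
        rcases mul_eq_zero.mp hfac with e | e
        · have hsq : x ^ 2 = (2 * η / (η ^ 2 - 1)) ^ 2 := by
            have hpv : p = -(2 / (η ^ 2 - 1)) := by linarith
            have : x ^ 2 = -p - c := by linarith
            rw [this, hpv, hc]; field_simp; ring
          rw [neg_div]
          exact sq_eq_sq_iff_eq_or_eq_neg.mp hsq
        · -- the other fixed point would give a rational point on the curve
          exfalso
          have hpv : p = (η ^ 2 + 1) / (η ^ 2 - 1) := by linarith
          have hx2 : x ^ 2 = -p - c := by linarith
          refine hη1 (curve_points (y := x * (η ^ 2 - 1)) ?_)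
          rw [mul_pow, hx2, hpv, hc]; field_simp; ring
      · intro hx
        refine ⟨-2 / (η ^ 2 - 1), div_ne_zero (by norm_num) hD, ?_, ?_⟩
        · rw [hc]; field_simp; ring
        · rcases hx with rfl | rfl <;> rw [hc] <;> field_simp <;> ring
    · rw [div_left_inj' hD]
      constructor <;> intro h <;> linarith
    · constructor
      · rintro rfl; rw [hc]; norm_num
      · intro h
        rw [h, eq_div_iff (pow_ne_zero 2 hD)] at hc
        have h3 : η ^ 2 * (η ^ 2 - 3) = 0 := by linear_combination -hc / 2
        rcases mul_eq_zero.mp h3 with e | e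
        · exact pow_eq_zero_iff two_ne_zero |>.mp e
        · -- `η² = 3` would also give a point, with `y = 0`, on the curve
          exact absurd (curve_points (y := 0) (by linear_combination (η ^ 2 + 1) * e)) hη1
    · rw [hc]; field_simp; ring
    · refine ⟨-2 / (η ^ 2 - 1), ?_⟩
      simp only [fc]
      rw [hc]; field_simp; ring
end

section
/- Let c ∈ ℚ and f_c(z) = z² + c. The point 0 is preperiodic for f_c if and only if c ∈ {−2, −1, 0}, and 0 is periodic for f_c if and only if c ∈ {−1, 0}; for c = −1 the point 0 has exact period 2, and for c = 0 it has exact period 1. -/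
theorem IsPeriodicPoint.isPreperiodicPoint {f : ℚ → ℚ} {x : ℚ} (h : IsPeriodicPoint f x) :
    IsPreperiodicPoint f x := ⟨0, h⟩

/-- The escape criterion: `N` is a size function that increases along the orbit of `0`, which
therefore never repeats. -/
theorem not_preperiodic_of_growth (c : ℚ) (N : ℚ → ℚ) (h0 : N 0 < N c)
    (h : ∀ a, N c ≤ N a → N a < N (a ^ 2 + c)) : ¬ IsPreperiodicPoint (fc c) 0 := by
  have hc : ∀ k, N c ≤ N ((fc c)^[k + 1] 0) := by
    intro k
    induction k with
    | zero => simp [fc]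
    | succ k ih =>
      rw [Function.iterate_succ_apply']
      exact ih.trans (h _ ih).le
  have hmono : StrictMono fun k => N ((fc c)^[k] 0) := by
    refine strictMono_nat_of_lt_succ fun k => ?_
    cases k with
    | zero => simpa [fc] using h0
    | succ k =>
      rw [Function.iterate_succ_apply' _ (k + 1)]
      exact h _ (hc k)
  rintro ⟨n, m, hm, hper, -⟩
  rw [← Function.iterate_add_apply] at hper
  have := hmono.injective (congrArg N hper)
  omega

theorem one_lt_padicNorm_of_dvd_den {p : ℕ} [hp : Fact p.Prime] {c : ℚ} (h : p ∣ c.den) :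
    1 < padicNorm p c := by
  have hnum : padicNorm p (c.num : ℚ) = 1 := by
    rw [padicNorm.int_eq_one_iff]
    intro hd
    have := Nat.dvd_gcd (Int.natCast_dvd.mp hd) h
    rw [c.reduced.gcd_eq_one] at this
    exact hp.out.one_lt.ne' (Nat.dvd_one.mp this)
  have hden : padicNorm p (c.den : ℚ) < 1 := (padicNorm.nat_lt_one_iff c.den).mpr h
  have hpos : 0 < padicNorm p (c.den : ℚ) :=
    lt_of_le_of_ne (padicNorm.nonneg _)
      (padicNorm.nonzero (by exact_mod_cast c.den_ne_zero)).symm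
  rw [← Rat.num_div_den c, padicNorm.div, hnum]
  exact (one_lt_div hpos).mpr hden

theorem den_eq_one_of_preperiodic {c : ℚ} (h : IsPreperiodicPoint (fc c) 0) : c.den = 1 := by
  by_contra hd
  obtain ⟨p, hp, hpd⟩ := Nat.exists_prime_and_dvd hd
  have : Fact p.Prime := ⟨hp⟩
  have hc := one_lt_padicNorm_of_dvd_den hpd
  refine not_preperiodic_of_growth c (padicNorm p) (by rw [padicNorm.zero]; linarith) ?_ h
  intro a ha
  have hsq : padicNorm p (a ^ 2) = padicNorm p a ^ 2 := by rw [sq, padicNorm.mul, sq]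
  have hlt : padicNorm p a < padicNorm p (a ^ 2) := by rw [hsq]; nlinarith
  rw [padicNorm.add_eq_max_of_ne (by linarith), max_eq_left (by linarith)]
  exact hlt

theorem eq_of_preperiodic {c : ℚ} (h : IsPreperiodicPoint (fc c) 0) :
    c = -2 ∨ c = -1 ∨ c = 0 := by
  have hint : (c.num : ℚ) = c := Rat.den_eq_one_iff c |>.mp (den_eq_one_of_preperiodic h)
  have hlow : -2 ≤ c := by
    by_contra! hlt
    refine not_preperiodic_of_growth c (fun x => |x|) ?_ ?_ h
    · simpa using (by linarith : c < 0).ne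
    · intro a ha
      have hc : |c| = -c := abs_of_neg (by linarith)
      simp only [hc] at ha ⊢
      refine lt_of_lt_of_le ?_ (le_abs_self _)
      rw [← sq_abs a]
      nlinarith
  have hhigh : c < 1 := by
    by_contra! hge
    refine not_preperiodic_of_growth c id (by simp only [id]; linarith) ?_ h
    intro a ha
    simp only [id] at ha ⊢
    nlinarith
  rw [← hint] at hlow hhigh ⊢
  have h1 : -2 ≤ c.num := by exact_mod_cast hlow
  have h2 : c.num < 1 := by exact_mod_cast hhigh
  have h3 : c.num = -2 ∨ c.num = -1 ∨ c.num = 0 := by omega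
  exact_mod_cast h3

theorem exactPeriod_neg_one : ExactPeriod (fc (-1)) 2 0 := by
  refine ⟨by norm_num [fc], fun k h1 h2 => ?_⟩
  obtain rfl : k = 1 := by omega
  norm_num [fc]

theorem exactPeriod_zero : ExactPeriod (fc 0) 1 0 :=
  ⟨by norm_num [fc], fun k h1 h2 => by omega⟩

theorem preperiodic_neg_two : IsPreperiodicPoint (fc (-2)) 0 :=
  ⟨2, 1, le_rfl, by norm_num [fc], fun k h1 h2 => by omega⟩

theorem not_periodic_neg_two : ¬ IsPeriodicPoint (fc (-2)) 0 := by
  have h2 : ∀ k, (fc (-2))^[k + 2] 0 = 2 := by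
    intro k
    induction k with
    | zero => norm_num [fc]
    | succ k ih =>
      rw [show k + 1 + 2 = (k + 2) + 1 by ring, Function.iterate_succ_apply', ih]
      norm_num [fc]
  rintro ⟨m, hm, hper, -⟩
  match m, hm with
  | 1, _ => norm_num [fc] at hper
  | k + 2, _ => rw [h2] at hper; norm_num at hper

/-- the point `0` is preperiodic for `f_c` iff `c ∈ {-2, -1, 0}`, and periodic
iff `c ∈ {-1, 0}`; for `c = -1` it has exact period 2, and for `c = 0` exact period 1. -/
theorem stmt_14 (c : ℚ) :
    (IsPreperiodicPoint (fc c) 0 ↔ c = -2 ∨ c = -1 ∨ c = 0) ∧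
    (IsPeriodicPoint (fc c) 0 ↔ c = -1 ∨ c = 0) ∧
    (c = -1 → ExactPeriod (fc c) 2 0) ∧
    (c = 0 → ExactPeriod (fc c) 1 0) := by
  have hper : c = -1 ∨ c = 0 → IsPeriodicPoint (fc c) 0 := by
    rintro (rfl | rfl)
    · exact ⟨2, by norm_num, exactPeriod_neg_one⟩
    · exact ⟨1, le_rfl, exactPeriod_zero⟩
  refine ⟨⟨eq_of_preperiodic, ?_⟩, ⟨fun h => ?_, hper⟩, ?_, ?_⟩
  · rintro (rfl | h)
    · exact preperiodic_neg_two
    · exact (hper h).isPreperiodicPoint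
  · rcases eq_of_preperiodic h.isPreperiodicPoint with rfl | h'
    · exact absurd h not_periodic_neg_two
    · exact h'
  · rintro rfl; exact exactPeriod_neg_one
  · rintro rfl; exact exactPeriod_zero
end
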